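/- arXiv:1901.01066 — 2 statements merged into one kernel-verified Lean document; each statement's English description precedes it below -/
import Mathlib

section
/- Let (n,u) be one of the pairs in E = {(8,-5),(8,-6),(9,-5),(9,-6),(16,-9),(16,-10),(24,-13),(24,-14),(25,-13),(25,-14),(32,-17),(32,-18)}, and set α = u + 1/2. Then the generalised Laguerre polynomial L_n^{(α)}(x) is irreducible over ℚ and the Galois group of its splitting field over ℚ is isomorphic to the alternating group A_n on n letters. -/
open Polynomial Finset

/-- The generalised Laguerre polynomial `L_n^{(α)}(x)` with `α = u + 1/2`, as a polynomial
over `ℚ`:  `L_n^{(α)}(x) = (-1)^n ∑_{j=0}^n C(n+α, n-j) (-x)^j / j!`, where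
`C(n+α, n-j) = (∏_{i=j+1}^n (α+i))/(n-j)!`. -/
noncomputable def laguerre (n : ℕ) (u : ℤ) : Polynomial ℚ :=
  (-1 : ℚ) ^ n •
    ∑ j ∈ Finset.range (n + 1),
      Polynomial.C ((∏ i ∈ Finset.Icc (j + 1) n, ((u : ℚ) + 1 / 2 + (i : ℚ))) /
          ((Nat.factorial (n - j) : ℚ) * (Nat.factorial j : ℚ))) * (-Polynomial.X) ^ j

/-- The exceptional set of pairs `(n, u)`. -/
def exceptionalSet : Set (ℤ × ℤ) :=
  {(8, -5), (8, -6), (9, -5), (9, -6), (16, -9), (16, -10), (24, -13), (24, -14),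
    (25, -13), (25, -14), (32, -17), (32, -18)}

namespace LaguerreAux

section
/-- coefficient of the rescaled monic integral Laguerre polynomial, up to sign -/
def lagCoeff (a : ℤ) (n j : ℕ) : ℤ := (n.choose j : ℤ) * ∏ i ∈ Finset.Icc (j + 1) n, (a + 2 * (i : ℤ))

/-- rescaled monic integral Laguerre polynomial -/
noncomputable def lagPoly (a : ℤ) (n : ℕ) : ℤ[X] :=
  ∑ j ∈ Finset.range (n + 1), C ((-1) ^ (n + j) * lagCoeff a n j) * X ^ j

lemma lagPoly_coeff (a : ℤ) (n j : ℕ) :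
    (lagPoly a n).coeff j = (-1) ^ (n + j) * lagCoeff a n j := by
  simp only [lagPoly, finsetSum_coeff, coeff_C_mul, coeff_X_pow]
  by_cases h : j < n + 1
  · rw [Finset.sum_eq_single j] <;> simp +contextual [h, eq_comm]
  · rw [Finset.sum_eq_zero]
    · have : n.choose j = 0 := Nat.choose_eq_zero_of_lt (by omega)
      simp [lagCoeff, this]
    · intro i hi
      have : j ≠ i := by simp at hi; omega
      simp [this]

lemma lagCoeff_gt (a : ℤ) {n j : ℕ} (h : n < j) : lagCoeff a n j = 0 := by
  simp [lagCoeff, Nat.choose_eq_zero_of_lt h]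

lemma lagCoeff_self (a : ℤ) (n : ℕ) : lagCoeff a n n = 1 := by simp [lagCoeff]

lemma lagPoly_natDegree_le (a : ℤ) (n : ℕ) : (lagPoly a n).natDegree ≤ n := by
  rw [natDegree_le_iff_coeff_eq_zero]
  intro N hN
  rw [lagPoly_coeff, lagCoeff_gt a hN, mul_zero]

lemma lagPoly_coeff_self (a : ℤ) (n : ℕ) : (lagPoly a n).coeff n = 1 := by
  rw [lagPoly_coeff, lagCoeff_self, ← two_mul, pow_mul]; simp

lemma lagPoly_monic (a : ℤ) (n : ℕ) : (lagPoly a n).Monic :=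
  monic_of_natDegree_le_of_coeff_eq_one n (lagPoly_natDegree_le a n) (lagPoly_coeff_self a n)

lemma lagPoly_natDegree (a : ℤ) (n : ℕ) : (lagPoly a n).natDegree = n :=
  natDegree_eq_of_le_of_coeff_ne_zero (lagPoly_natDegree_le a n) (by simp [lagPoly_coeff_self])

lemma prodIcc_succ (a : ℤ) {n j : ℕ} (h : j ≤ n) :
    ∏ i ∈ Finset.Icc (j + 1) (n + 1), (a + 2 * (i : ℤ)) =
      (∏ i ∈ Finset.Icc (j + 1) n, (a + 2 * (i : ℤ))) * (a + 2 * (n + 1)) := by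
  rw [Finset.prod_Icc_succ_top (by omega)]; push_cast; ring

/-- differential relation between consecutive polynomials -/
lemma lagPoly_deriv (a : ℤ) (n : ℕ) :
    X * derivative (lagPoly a (n + 1)) =
      C ((n : ℤ) + 1) * lagPoly a (n + 1) + C (((n : ℤ) + 1) * (2 * (n + 1) + a)) * lagPoly a n := by
  ext j
  rw [coeff_add, coeff_C_mul, coeff_C_mul]
  rcases j with _ | j
  · simp only [coeff_X_mul_zero, lagPoly_coeff, lagCoeff, Nat.choose_zero_right]
    rw [prodIcc_succ a (Nat.zero_le _)]
    push_cast; ring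
  · rw [coeff_X_mul, coeff_derivative]
    simp only [lagPoly_coeff]
    rcases lt_trichotomy j n with h | h | h
    · have h1 := Nat.choose_mul_succ_eq n (j + 1)
      zify [show j + 1 ≤ n + 1 by omega] at h1
      simp only [lagCoeff]
      rw [prodIcc_succ a h]
      have e : ((n + 1).choose (j + 1) : ℤ) * (n - j) = (n + 1) * n.choose (j + 1) := by
        linear_combination -h1
      generalize (∏ i ∈ Finset.Icc (j + 1 + 1) n, (a + 2 * (i : ℤ))) = Q
      have e2 : (-1 : ℤ) ^ (n + 1 + (j + 1)) = - (-1) ^ (n + (j + 1)) := by ring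
      rw [e2]
      generalize (-1 : ℤ) ^ (n + (j + 1)) = s
      linear_combination s * Q * (a + 2 * (n + 1)) * e
    · subst h
      rw [lagCoeff_self, lagCoeff_gt a (Nat.lt_succ_self _)]
      push_cast; ring
    · rw [lagCoeff_gt a (by omega), lagCoeff_gt a (by omega)]; ring

/-- three-term recurrence -/
lemma lagPoly_rec (a : ℤ) (n : ℕ) :
    lagPoly a (n + 2) = C (-(2 * ((n : ℤ) + 1) * (2 * (n + 1) + a))) * lagPoly a n +
      lagPoly a (n + 1) * (X - C (4 * (n : ℤ) + 6 + a)) := by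
  ext j
  rw [mul_sub, coeff_add, coeff_sub, coeff_C_mul, coeff_mul_C]
  rcases j with _ | j
  · simp only [mul_coeff_zero, coeff_X_zero, mul_zero, lagPoly_coeff, lagCoeff, Nat.choose_zero_right]
    rw [prodIcc_succ a (Nat.zero_le _), prodIcc_succ a (Nat.zero_le _)]
    push_cast; ring
  · rw [coeff_mul_X]
    simp only [lagPoly_coeff]
    rcases lt_trichotomy j n with h | h | h
    · have h1 := Nat.add_one_mul_choose_eq n j
      have h2 := Nat.add_one_mul_choose_eq (n + 1) j
      have h3 := Nat.choose_succ_succ n j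
      have h4 := Nat.choose_succ_succ (n + 1) j
      simp only [lagCoeff]
      rw [prodIcc_succ a (show j + 1 ≤ n + 1 by omega), prodIcc_succ a (show j + 1 ≤ n by omega),
        prodIcc_succ a (show j ≤ n by omega),
        ← Finset.mul_prod_Ioc_eq_prod_Icc (show j + 1 ≤ n by omega),
        show Finset.Ioc (j + 1) n = Finset.Icc (j + 1 + 1) n by ext; simp]
      zify at h1 h2 h3 h4
      generalize (∏ i ∈ Finset.Icc (j + 1 + 1) n, (a + 2 * (i : ℤ))) = Q
      rw [show (-1 : ℤ) ^ (n + 2 + (j + 1)) = - (-1) ^ (n + j) by ring,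
        show (-1 : ℤ) ^ (n + 1 + (j + 1)) = (-1) ^ (n + j) by ring,
        show (-1 : ℤ) ^ (n + (j + 1)) = - (-1) ^ (n + j) by ring,
        show (-1 : ℤ) ^ (n + 1 + j) = - (-1) ^ (n + j) by ring]
      generalize (-1 : ℤ) ^ (n + j) = s
      push_cast
      simp only [Nat.succ_eq_add_one] at *
      generalize ((n + 2).choose (j + 1) : ℤ) = A at *
      generalize ((n + 1).choose (j + 1) : ℤ) = B at *
      generalize ((n + 1).choose j : ℤ) = B' at *
      generalize (n.choose (j + 1) : ℤ) = D at *
      generalize (n.choose j : ℤ) = D' at *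
      have key : A * (a + 2 * (n + 2)) = B' * (a + 2 * (j + 1)) + (4 * n + 6 + a) * B
          - 2 * (n + 1) * D := by
        have hA : A = B' + B := h4
        have hB : B = D' + D := h3
        have h1' : (n + 1) * D' = B * (j + 1) := h1
        have h2' : (n + 2) * B' = A * (j + 1) := by linear_combination h2
        rw [hA] at h2' ⊢
        linear_combination 2 * h2' - 2 * (n + 1) * hB - 2 * h1'
      linear_combination (-s) * Q * (a + 2 * (n + 1)) * key
    · subst h
      rw [lagCoeff_gt a (Nat.lt_succ_self _), lagCoeff_self]
      simp only [lagCoeff, Nat.choose_succ_self_right]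
      have e1 : (-1 : ℤ) ^ (j * 2) = 1 := by rw [mul_comm, pow_mul]; simp
      simp
      ring_nf
      rw [e1]
      ring
    · rw [lagCoeff_gt a (show n < j + 1 by omega), lagCoeff_gt a (show n + 1 < j + 1 by omega)]
      rcases eq_or_ne j (n + 1) with rfl | h'
      · rw [lagCoeff_self, lagCoeff_self]; ring
      · rw [lagCoeff_gt a (show n + 1 < j by omega), lagCoeff_gt a (show n + 2 < j + 1 by omega)]
        ring

/-- the resultants of consecutive polynomials -/
def lagRes (a : ℤ) : ℕ → ℤ
  | 0 => 1
  | n + 1 => (-(2 * ((n : ℤ) + 1) * (2 * (n + 1) + a))) ^ (n + 1) * lagRes a n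

lemma lagRes_eq (a : ℤ) (n : ℕ) :
    resultant (lagPoly a (n + 1)) (lagPoly a n) (n + 1) n = lagRes a n := by
  induction n with
  | zero => simp [lagPoly_coeff, lagRes, lagCoeff_self]
  | succ n ih =>
    rw [lagPoly_rec, resultant_add_mul_left _ _ _ _ _ _ (lagPoly_natDegree_le a (n + 1)),
      resultant_C_mul_left, show n + 1 + 1 = n + 2 from rfl,
      resultant_add_left_deg _ _ _ _ _ (lagPoly_natDegree_le a n), resultant_comm, ih,
      lagPoly_coeff_self, lagRes]
    · have : (-1 : ℤ) ^ ((n + 1) * 2) = 1 := by rw [mul_comm, pow_mul]; simp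
      have h2 : (-1 : ℤ) ^ (n * (n + 1)) = 1 := (Nat.even_mul_succ_self n).neg_one_pow
      rw [this, h2]; ring
    · have := natDegree_X_sub_C_le (R := ℤ) (4 * (n : ℤ) + 6 + a)
      omega

/-- the squared Vandermonde determinant of the roots -/
lemma vandermonde_sq {K : Type*} [Field K] [CharZero K] (a : ℤ) (n : ℕ) (r : Fin (n + 1) → K)
    (hr : (lagPoly a (n + 1)).map (Int.castRingHom K) = ∏ i, (X - C (r i)))
    (hn : Even ((n + 1) * n / 2)) :
    ((∏ i ∈ Finset.Icc 1 (n + 1), (a + 2 * (i : ℤ)) : ℤ) : K) *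
        (Matrix.vandermonde r).det ^ 2 =
      (((((n : ℤ) + 1) * (2 * (n + 1) + a)) ^ (n + 1) * lagRes a n : ℤ) : K) := by
  have hV : (Matrix.vandermonde r).det ^ 2 =
      ∏ i, ((derivative (lagPoly a (n + 1))).map (Int.castRingHom K)).eval (r i) := by
    rw [← derivative_map, hr, Matrix.det_vandermonde]
    have h1 : ∀ i, (derivative (∏ i, (X - C (r i)))).eval (r i) =
        ∏ j ∈ {i}ᶜ, (r i - r j) := by
      intro i
      rw [derivative_prod_finset, eval_finsetSum, Finset.sum_eq_single i]
      · simp [eval_prod, Finset.compl_singleton]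
      · intro j _ hj
        simp only [derivative_X_sub_C, mul_one, eval_prod]
        apply Finset.prod_eq_zero (i := i) <;> simp [hj.symm]
      · simp
    rw [Finset.prod_congr rfl (fun i _ => h1 i),
      ← Finset.prod_prod_Ioi_mul_eq_prod_prod_off_diag (fun j i => r i - r j)]
    have h2 : ∀ i : Fin (n + 1), ∏ j ∈ Finset.Ioi i, ((r i - r j) * (r j - r i)) =
        (-1) ^ (Finset.Ioi i).card * (∏ j ∈ Finset.Ioi i, (r j - r i)) ^ 2 := by
      intro i
      rw [← Finset.prod_pow, ← Finset.prod_const, ← Finset.prod_mul_distrib]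
      exact Finset.prod_congr rfl (fun j _ => by ring)
    rw [Finset.prod_congr rfl (fun i _ => h2 i), Finset.prod_mul_distrib, Finset.prod_pow,
      Finset.prod_pow_eq_pow_sum]
    have h3 : ∑ i : Fin (n + 1), (Finset.Ioi i).card = (n + 1) * n / 2 := by
      simp only [Fin.card_Ioi]
      rw [Fin.sum_univ_eq_sum_range (fun i => n + 1 - 1 - i) (n + 1),
        Finset.sum_range_reflect (fun i => i) (n + 1), Finset.sum_range_id (n + 1)]
      simp
    rw [h3, hn.neg_one_pow, one_mul]
  have hsplit : ((lagPoly a (n + 1)).map (Int.castRingHom K)).Splits := by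
    rw [hr]; exact Splits.prod (fun i _ => Splits.X_sub_C _)
  have hroots : ((lagPoly a (n + 1)).map (Int.castRingHom K)).roots =
      Finset.univ.val.map r := by
    rw [hr, roots_prod _ _ (Finset.prod_ne_zero_iff.mpr fun i _ => X_sub_C_ne_zero _)]
    simp only [roots_X_sub_C, Multiset.bind_singleton]
  have hres : ∏ i, ((lagPoly a n).map (Int.castRingHom K)).eval (r i) = ((lagRes a n : ℤ) : K) := by
    have h := resultant_eq_prod_eval ((lagPoly a (n + 1)).map (Int.castRingHom K))
      ((lagPoly a n).map (Int.castRingHom K)) n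
      (natDegree_map_le.trans (lagPoly_natDegree_le a n)) hsplit
    rw [(lagPoly_monic a (n + 1)).natDegree_map, lagPoly_natDegree, resultant_map_map, lagRes_eq,
      ((lagPoly_monic a (n + 1)).map _).leadingCoeff, hroots,
      one_pow, one_mul, Multiset.map_map] at h
    exact h.symm
  have hconst : ((∏ i ∈ Finset.Icc 1 (n + 1), (a + 2 * (i : ℤ)) : ℤ) : K) = ∏ i, r i := by
    have h := congrArg (fun p => p.coeff 0) hr
    simp only [coeff_map, lagPoly_coeff, lagCoeff] at h
    rw [coeff_zero_eq_eval_zero, eval_prod] at h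
    simp only [eval_sub, eval_X, eval_C, zero_sub, Finset.prod_neg] at h
    have h1 : ((-1 : K) ^ (n + 1)) * (-1) ^ (n + 1) = 1 := by
      rw [← pow_add, ← two_mul, pow_mul]; simp
    simp only [Finset.card_univ, Fintype.card_fin, Nat.choose_zero_right, zero_add, add_zero] at h
    push_cast at h ⊢
    have h' := congrArg (fun z => (-1 : K) ^ (n + 1) * z) h
    simp only [Int.coe_castRingHom] at h'
    push_cast at h'
    rw [one_mul, ← mul_assoc, ← mul_assoc, h1, one_mul, one_mul] at h'
    exact h'
  rw [hV, hconst, ← Finset.prod_mul_distrib]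
  have hpt : ∀ i, r i * ((derivative (lagPoly a (n + 1))).map (Int.castRingHom K)).eval (r i) =
      ((((n : ℤ) + 1) * (2 * (n + 1) + a) : ℤ) : K) *
        ((lagPoly a n).map (Int.castRingHom K)).eval (r i) := by
    intro i
    have h := congrArg (fun q => (q.map (Int.castRingHom K)).eval (r i)) (lagPoly_deriv a n)
    have h0 : ((lagPoly a (n + 1)).map (Int.castRingHom K)).eval (r i) = 0 := by
      rw [hr, eval_prod]; exact Finset.prod_eq_zero (Finset.mem_univ i) (by simp)
    simp only [Polynomial.map_mul, Polynomial.map_add, map_X, eval_mul, eval_add, eval_X, h0,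
      map_C, eval_C, mul_zero, zero_add] at h
    simpa using h
  rw [Finset.prod_congr rfl (fun i _ => hpt i), Finset.prod_mul_distrib, hres]
  simp
end

section
/-- `H` contains an element acting on (reductions of) the roots of `M` as a Frobenius at `p`. -/
def HasFrob {n : ℕ} (H : Subgroup (Equiv.Perm (Fin n))) (M : ℤ[X]) (p : ℕ) : Prop :=
  ∃ (k : Type) (_ : Field k) (_ : CharP k p) (τ : Equiv.Perm (Fin n)) (ρ : Fin n → k),
    τ ∈ H ∧ Function.Injective ρ ∧ (∀ i, ρ (τ i) = ρ i ^ p) ∧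
      ∀ i, (M.map (Int.castRingHom k)).eval (ρ i) = 0

open NumberField in
theorem hasFrob_of_galois {K : Type} [Field K] [NumberField K] [IsGalois ℚ K] {n : ℕ}
    (M : ℤ[X]) (hM : M.Monic) (r : Fin n → K)
    (hr : ∀ i, (M.map (Int.castRingHom K)).eval (r i) = 0)
    (φ : Gal(K/ℚ) →* Equiv.Perm (Fin n)) (hφ : ∀ σ i, r (φ σ i) = σ (r i))
    (s : ℤ) (hs : (Matrix.vandermonde r).det ^ 2 = (s : K) ^ 2)
    (p : ℕ) (hp : p.Prime) (hps : ¬ (p : ℤ) ∣ s) : HasFrob φ.range M p := by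
  have hInt : ∀ i, IsIntegral ℤ (r i) := fun i => ⟨M, hM, by
    have := hr i
    rw [eval_map] at this
    exact this⟩
  let R : Fin n → 𝓞 K := fun i => ⟨r i, hInt i⟩
  have hRr : ∀ i, algebraMap (𝓞 K) K (R i) = r i := fun i => rfl
  have : Fact p.Prime := ⟨hp⟩
  have hpI : (Ideal.span {(p : ℤ)}).IsPrime :=
    (Ideal.span_singleton_prime (by exact_mod_cast hp.ne_zero)).mpr (Nat.prime_iff_prime_int.mp hp)
  obtain ⟨Q, -, hQ, hQp⟩ := Ideal.exists_ideal_over_prime_of_isIntegral (S := 𝓞 K)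
    (Ideal.span {(p : ℤ)}) ⊥ (by
      rw [← RingHom.ker_eq_comap_bot, (RingHom.injective_iff_ker_eq_bot _).mp
        (FaithfulSMul.algebraMap_injective ℤ (𝓞 K))]
      exact bot_le)
  have hmem : ∀ z : ℤ, ((z : ℤ) : 𝓞 K) ∈ Q ↔ (p : ℤ) ∣ z := by
    intro z
    rw [← Ideal.mem_span_singleton, ← hQp, Ideal.mem_comap]; simp
  have hQ0 : Q ≠ ⊥ := by
    rintro rfl
    have := (hmem p).mpr dvd_rfl
    simp at this
    exact hp.ne_zero this
  have hfin : Finite (𝓞 K ⧸ Q) := Ideal.finiteQuotientOfFreeOfNeBot Q hQ0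
  have hmax : Q.IsMaximal :=
    Ideal.Quotient.maximal_of_isField _ (Finite.isField_of_domain (𝓞 K ⧸ Q))
  obtain ⟨σ, hσ⟩ := IsArithFrobAt.exists_of_isInvariant ℤ Gal(K/ℚ) Q
  have hcard : Nat.card (ℤ ⧸ Q.under ℤ) = p := by
    have : Q.under ℤ = Ideal.span {(p : ℤ)} := hQp
    rw [this, Nat.card_congr (Int.quotientSpanNatEquivZMod p).toEquiv, Nat.card_zmod]
  let fld : Field (𝓞 K ⧸ Q) := Ideal.Quotient.field Q
  have hchar : CharP (𝓞 K ⧸ Q) p := by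
    constructor
    intro x
    have h := hmem x
    rw [← Ideal.Quotient.eq_zero_iff_mem] at h
    simp only [Int.cast_natCast, map_natCast] at h
    rw [h]
    exact_mod_cast Iff.rfl
  refine ⟨𝓞 K ⧸ Q, fld, hchar, φ σ, fun i => Ideal.Quotient.mk Q (R i), ⟨σ, rfl⟩, ?_, ?_, ?_⟩
  · intro i j hij
    by_contra hne
    have hVR : ((Matrix.vandermonde R).det) ^ 2 = ((s : ℤ) : 𝓞 K) ^ 2 := by
      apply FaithfulSMul.algebraMap_injective (𝓞 K) K
      rw [map_pow, map_pow, RingHom.map_det]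
      simp only [map_intCast]
      rw [← hs]
      congr 2
    have h0 : Ideal.Quotient.mk Q (Matrix.vandermonde R).det = 0 := by
      rw [RingHom.map_det]
      apply Matrix.det_zero_of_row_eq hne
      ext b
      simp only [Matrix.vandermonde, RingHom.mapMatrix_apply, Matrix.map_apply, Matrix.of_apply,
        map_pow]
      exact congrArg (· ^ (b : ℕ)) hij
    have h1 : ((s : ℤ) : 𝓞 K) ^ 2 ∈ Q := by
      rw [← hVR, ← Ideal.Quotient.eq_zero_iff_mem, map_pow, h0]; simp
    exact hps ((hmem s).mp (hQ.mem_of_pow_mem _ h1))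
  · intro i
    have h := hσ.mk_apply (R i)
    rw [hcard] at h
    show Ideal.Quotient.mk Q (R (φ σ i)) = Ideal.Quotient.mk Q (R i) ^ p
    rw [show R (φ σ i) = σ • (R i) from Subtype.ext (hφ σ i)]
    exact h
  · intro i
    have h : (M.map (Int.castRingHom (𝓞 K))).eval (R i) = 0 := by
      apply FaithfulSMul.algebraMap_injective (𝓞 K) K
      rw [map_zero, ← hr i, ← hRr i, eval_map, eval_map, hom_eval₂]
      congr 1
    have h' := congrArg (Ideal.Quotient.mk Q) h
    rw [map_zero, eval_map, hom_eval₂] at h'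
    rw [eval_map, ← h']
    congr 1
end

section
open MulAction
open scoped Pointwise
lemma le_card_orbit {G X : Type*} [Group G] [MulAction G X] [Finite X] (x : X) (g : G) (q : ℕ)
    (hq : q.Prime) (h1 : g ^ q • x = x) (h2 : g • x ≠ x) : q ≤ (orbit G x).ncard := by
  have hper : Function.minimalPeriod (g • ·) x = q := by
    have hd : Function.minimalPeriod (g • ·) x ∣ q := by
      apply Function.IsPeriodicPt.minimalPeriod_dvd
      rw [Function.IsPeriodicPt, Function.IsFixedPt, smul_iterate]
      exact h1
    rcases (Nat.dvd_prime hq).mp hd with h | h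
    · exact absurd (Function.minimalPeriod_eq_one_iff_isFixedPt.mp h) h2
    · exact h
  have : Fintype (orbit (Subgroup.zpowers g) x) := Fintype.ofFinite _
  rw [← hper, minimalPeriod_eq_card, ← Nat.card_eq_fintype_card, Nat.card_coe_set_eq]
  apply Set.ncard_le_ncard _ (Set.toFinite _)
  rintro _ ⟨⟨y, hy⟩, rfl⟩
  exact ⟨y, rfl⟩

theorem pretransitive_of {n : ℕ} (H : Subgroup (Equiv.Perm (Fin n))) (q : ℕ) (hq : q.Prime)
    (h1 : ∃ τ ∈ H, ∃ i, (τ ^ q) i = i ∧ τ i ≠ i)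
    (h2 : ∃ τ ∈ H, ∀ m, 0 < m → m ≤ n - q → ∀ i, (τ ^ m) i ≠ i) :
    IsPretransitive H (Fin n) := by
  obtain ⟨τ, hτ, i₀, hi1, hi2⟩ := h1
  obtain ⟨τ', hτ', hm⟩ := h2
  have hO : q ≤ (orbit H i₀).ncard := le_card_orbit i₀ (⟨τ, hτ⟩ : H) q hq hi1 hi2
  have hall : ∀ x, x ∈ orbit H i₀ := by
    intro x
    by_contra hx
    have hmaps : ∀ t ∈ (Finset.range (n - q + 1)), (τ' ^ t) x ∈ ((orbit H i₀)ᶜ).toFinite.toFinset := by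
      intro t _
      simp only [Set.Finite.mem_toFinset, Set.mem_compl_iff]
      intro h
      apply hx
      have : (τ' ^ t) x = (⟨τ' ^ t, H.pow_mem hτ' t⟩ : H) • x := rfl
      rw [this] at h
      have h2 := mem_orbit_of_mem_orbit (⟨τ' ^ t, H.pow_mem hτ' t⟩ : H)⁻¹ h
      rwa [inv_smul_smul] at h2
    have hc : (((orbit H i₀)ᶜ).toFinite.toFinset).card < (Finset.range (n - q + 1)).card := by
      rw [← Set.ncard_eq_toFinset_card, Set.ncard_compl, Finset.card_range]
      simp; omega
    obtain ⟨a, ha, b, hb, hab, he⟩ := Finset.exists_ne_map_eq_of_card_lt_of_maps_to hc hmaps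
    have key : ∀ a b, a < b → b < n - q + 1 → (τ' ^ a) x = (τ' ^ b) x → False := by
      intro a b hab hb he
      apply hm (b - a) (by omega) (by omega) ((τ' ^ a) x)
      rw [← Equiv.Perm.mul_apply, ← pow_add, Nat.sub_add_cancel hab.le, he]
    simp only [Finset.mem_range] at ha hb
    rcases lt_or_gt_of_ne hab with h | h
    · exact key a b h hb he
    · exact key b a h ha he.symm
  exact (isPretransitive_iff_base i₀).mpr hall

theorem preprimitive_of {n : ℕ} (H : Subgroup (Equiv.Perm (Fin n))) (q : ℕ) (hq : q.Prime)
    (hqn : n < 2 * q) (h1 : ∃ τ ∈ H, ∃ i, (τ ^ q) i = i ∧ τ i ≠ i)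
    [IsPretransitive H (Fin n)] : IsPreprimitive H (Fin n) := by
  obtain ⟨τ, hτ, i₀, hi1, hi2⟩ := h1
  refine IsPreprimitive.of_isTrivialBlock_base i₀ (fun {B} hi hB => ?_)
  have hcard := hB.ncard_block_mul_ncard_orbit_eq ⟨i₀, hi⟩
  rw [Nat.card_fin] at hcard
  let g : H := ⟨τ, hτ⟩
  by_cases hg : g • B = B
  · right
    have hlt : q ≤ B.ncard := by
      have := le_card_orbit (G := Subgroup.zpowers g) i₀ ⟨g, Subgroup.mem_zpowers g⟩ q hq hi1 hi2
      refine this.trans (Set.ncard_le_ncard ?_ (Set.toFinite _))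
      rintro _ ⟨⟨y, hy⟩, rfl⟩
      have : Subgroup.zpowers g ≤ stabilizer H B := by
        rw [Subgroup.zpowers_le]; exact hg
      have h := this hy
      rw [mem_stabilizer_iff] at h
      show y • i₀ ∈ B
      rw [← h]
      exact Set.smul_mem_smul_set hi
    have : (orbit H B).ncard < 2 := by
      by_contra hcon
      push Not at hcon
      have := Nat.mul_le_mul hlt hcon
      omega
    have hpos : 0 < n := Fin.pos i₀
    have h1 : (orbit H B).ncard = 1 := by
      rcases Nat.lt_or_ge (orbit H B).ncard 1 with h | h
      · simp only [Nat.lt_one_iff] at h; rw [h] at hcard; omega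
      · omega
    rw [h1, mul_one] at hcard
    apply Set.eq_of_subset_of_ncard_le (Set.subset_univ _) _ (Set.toFinite _)
    rw [Set.ncard_univ, Nat.card_fin, hcard]
  · left
    have hgq : g ^ q • B = B := by
      have := hB (g₁ := g ^ q) (g₂ := 1)
      by_contra hne
      rw [one_smul] at this
      have hdis := this hne
      refine Set.disjoint_left.mp hdis ?_ hi
      exact ⟨i₀, hi, hi1⟩
    have := le_card_orbit B g q hq hgq hg
    rw [← Set.ncard_le_one_iff_subsingleton]
    by_contra hcon
    push Not at hcon
    have := Nat.mul_le_mul hcon this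
    omega

lemma isThreeCycle_of {n : ℕ} (g : Equiv.Perm (Fin n)) (h3 : g ^ 3 = 1) (h1 : g ≠ 1)
    (hs : g.support.card ≤ 3) : g.IsThreeCycle := by
  have ho : orderOf g = 3 := orderOf_eq_prime h3 h1
  have hc : g.IsCycle := Equiv.Perm.isCycle_of_prime_order (by rw [ho]; norm_num)
    (by rw [ho]; omega)
  rw [← card_support_eq_three_iff, ← hc.orderOf, ho]

theorem alternating_le_of {n : ℕ} (H : Subgroup (Equiv.Perm (Fin n))) (q : ℕ) (hq : q.Prime)
    (hqn : n < 2 * q) (h1 : ∃ τ ∈ H, ∃ i, (τ ^ q) i = i ∧ τ i ≠ i)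
    [IsPretransitive H (Fin n)] (h3 : ∃ g ∈ H, g ^ 3 = 1 ∧ g ≠ 1 ∧ g.support.card ≤ 3) :
    alternatingGroup (Fin n) ≤ H := by
  obtain ⟨g, hg, ha, hb, hc⟩ := h3
  exact Equiv.Perm.alternatingGroup_le_of_isPreprimitive_of_isThreeCycle_mem
    (preprimitive_of H q hq hqn h1) (isThreeCycle_of g ha hb hc) hg
end

section
/-- value at `x` of the polynomial with the given coefficients, leading coefficient first -/
def ev {R : Type*} [CommSemiring R] (x : R) : List ℕ → R
  | [] => 0
  | a :: as => (a : R) * x ^ as.length + ev x as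

/-- evaluate the entries of a list before passing it on -/
noncomputable def forceL {β : Type} (l : List ℕ) : (List ℕ → β) → β :=
  List.rec (fun c => c []) (fun a _ ih c =>
    Nat.rec (ih (fun t => c (List.cons 0 t)))
      (fun b _ => ih (fun t => c (List.cons (Nat.add b 1) t))) a) l

lemma forceL_eq {β : Type} : ∀ (l : List ℕ) (c : List ℕ → β), forceL l c = c l
  | [], _ => rfl
  | 0 :: l, c => forceL_eq l (fun t => c (0 :: t))
  | (b + 1) :: l, c => forceL_eq l (fun t => c ((b + 1) :: t))

/-- one row of a modular multiplication: `x * rs + l * gs + c * bs` -/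
noncomputable def row (p l c : ℕ) (gs : List ℕ) : List ℕ → List ℕ → List ℕ :=
  List.rec (fun _ _ => []) (fun g _ ih bs rs =>
    List.rec [] (fun b bs' _ => List.rec
       (List.cons (Nat.mod (Nat.add (Nat.mul l g) (Nat.mul c b)) p) (ih bs' []))
       (fun r rs1 _ => List.cons (Nat.mod (Nat.add r (Nat.add (Nat.mul l g) (Nat.mul c b))) p)
          (ih bs' rs1)) rs) bs) gs

/-- `acc * x ^ as.length + as * b` modulo `x ^ d - g` -/
noncomputable def mulmod (p : ℕ) (g b : List ℕ) (as : List ℕ) : List ℕ → List ℕ :=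
  List.rec (fun acc => acc) (fun a _ ih acc =>
     List.rec [] (fun l rs _ => forceL (row p l a g b rs) ih) acc) as

/-- `c * ts + as` modulo `p` -/
noncomputable def axpy (p c : ℕ) (ts : List ℕ) : List ℕ → List ℕ :=
  List.rec (fun _ => []) (fun t _ ih as =>
    List.rec [] (fun a as1 _ => List.cons (Nat.mod (Nat.add (Nat.mul c t) a) p) (ih as1)) as) ts

/-- linear combination of a table of vectors -/
noncomputable def lincomb (p : ℕ) (h : List ℕ) : List (List ℕ) → List ℕ → List ℕ :=
  List.rec (fun _ acc => acc) (fun c _ ih T acc =>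
    List.rec [] (fun t T1 _ => forceL (axpy p c t acc) (ih T1)) T) h

/-- equality test -/
noncomputable def eqL (a : List ℕ) : List ℕ → Bool :=
  List.rec (fun b => List.rec true (fun _ _ _ => false) b) (fun x _ ih b =>
    List.rec false (fun y b' _ => Bool.rec false (ih b') (Nat.beq x y)) b) a

lemma eqL_eq : ∀ (a b : List ℕ), eqL a b = true → a = b
  | [], [], _ => rfl
  | [], _ :: _, h => by cases h
  | _ :: _, [], h => by cases h
  | x :: a, y :: b, h => by
    change Bool.rec false (eqL a b) (Nat.beq x y) = true at h
    cases hxy : Nat.beq x y with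
    | false => rw [hxy] at h; cases h
    | true =>
      rw [hxy] at h
      rw [Nat.eq_of_beq_eq_true hxy, eqL_eq a b h]

section
variable {k : Type*} [Field k] {p : ℕ} [CharP k p]

lemma cast_mod' (p : ℕ) [CharP k p] (m : ℕ) : ((Nat.mod m p : ℕ) : k) = (m : k) := by
  show ((m % p : ℕ) : k) = m
  exact (CharP.natCast_eq_natCast k p).mpr (Nat.mod_modEq m p)

lemma row_spec (x : k) (l c : ℕ) : ∀ (gs bs rs : List ℕ), bs.length = gs.length →
    gs.length = rs.length + 1 → (row p l c gs bs rs).length = gs.length ∧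
    ev x (row p l c gs bs rs) = x * ev x rs + l * ev x gs + c * ev x bs
  | [], _, _, _, h => by simp at h
  | g :: gs, [], _, h, _ => by simp at h
  | [g], [b], [], _, _ => by
    refine ⟨rfl, ?_⟩
    show ((Nat.mod (Nat.add (Nat.mul l g) (Nat.mul c b)) p : ℕ) : k) * x ^ 0 + 0 = _
    rw [cast_mod']
    show (((l * g + c * b : ℕ)) : k) * x ^ 0 + 0 = _
    simp [ev]
  | [g], b :: b' :: bs, [], h, _ => by simp at h
  | g :: g' :: gs, _, [], _, h => by simp at h
  | g :: gs, b :: bs, r :: rs, h, h' => by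
    simp only [List.length_cons, Nat.add_right_cancel_iff] at h h'
    obtain ⟨h1, h2⟩ := row_spec x l c gs bs rs h h'
    have e : row p l c (g :: gs) (b :: bs) (r :: rs) =
      (Nat.mod (r + (l * g + c * b)) p) :: row p l c gs bs rs := rfl
    rw [e]
    refine ⟨by simp [h1], ?_⟩
    simp only [ev, cast_mod', h2, h1, h, h']
    push_cast
    ring

lemma mulmod_spec (x : k) (g b : List ℕ) (hg : x ^ g.length = ev x g) (hb : b.length = g.length)
    (hpos : 0 < g.length) : ∀ (as acc : List ℕ), acc.length = g.length →
    (mulmod p g b as acc).length = g.length ∧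
    ev x (mulmod p g b as acc) = ev x acc * x ^ as.length + ev x as * ev x b
  | [], acc, h => ⟨h, by simp [mulmod, ev]⟩
  | a :: as, [], h => by simp at h; omega
  | a :: as, l :: rs, h => by
    have e : mulmod p g b (a :: as) (l :: rs) = mulmod p g b as (row p l a g b rs) :=
      forceL_eq _ _
    obtain ⟨h1, h2⟩ := row_spec (p := p) x l a g b rs hb (by simpa using h.symm)
    obtain ⟨h3, h4⟩ := mulmod_spec x g b hg hb hpos as (row p l a g b rs) h1
    rw [e]
    refine ⟨h3, ?_⟩
    have : rs.length + 1 = g.length := by simpa using h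
    simp only [h4, h2, ev, List.length_cons]
    rw [← hg, ← this]
    ring

lemma axpy_spec (x : k) (c : ℕ) : ∀ (ts as : List ℕ), as.length = ts.length →
    (axpy p c ts as).length = ts.length ∧ ev x (axpy p c ts as) = c * ev x ts + ev x as
  | [], [], _ => by simp [axpy, ev]
  | [], _ :: _, h => by simp at h
  | _ :: _, [], h => by simp at h
  | t :: ts, a :: as, h => by
    simp only [List.length_cons, Nat.add_right_cancel_iff] at h
    obtain ⟨h1, h2⟩ := axpy_spec x c ts as h
    have e : axpy p c (t :: ts) (a :: as) = (Nat.mod (c * t + a) p) :: axpy p c ts as := rfl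
    rw [e]
    refine ⟨by simp [h1], ?_⟩
    simp only [ev, cast_mod', h2, h1, h]
    push_cast
    ring

/-- table of powers of `y` -/
def TabOK {k : Type*} [Field k] (x y : k) (d : ℕ) : List (List ℕ) → Prop
  | [] => True
  | t :: T => t.length = d ∧ ev x t = y ^ T.length ∧ TabOK x y d T

lemma lincomb_spec (x y : k) (d : ℕ) : ∀ (h : List ℕ) (T : List (List ℕ)) (acc : List ℕ),
    h.length = T.length → TabOK x y d T → acc.length = d →
    (lincomb p h T acc).length = d ∧ ev x (lincomb p h T acc) = ev y h + ev x acc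
  | [], _, acc, _, _, hd => ⟨hd, by simp [lincomb, ev]⟩
  | _ :: _, [], _, h, _, _ => by simp at h
  | c :: h, t :: T, acc, hl, ⟨ht1, ht2, hT⟩, hd => by
    simp only [List.length_cons, Nat.add_right_cancel_iff] at hl
    obtain ⟨h1, h2⟩ := axpy_spec (p := p) x c t acc (by rw [hd, ht1])
    obtain ⟨h3, h4⟩ := lincomb_spec x y d h T (axpy p c t acc) hl hT (by rw [h1, ht1])
    have e : lincomb p (c :: h) (t :: T) acc = lincomb p h T (axpy p c t acc) :=
      forceL_eq _ _
    rw [e]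
    refine ⟨h3, ?_⟩
    rw [h4, h2, ht2]
    simp only [ev, hl]
    ring

lemma ev_frob [Fact p.Prime] (x : k) : ∀ h : List ℕ, ev (x ^ p) h = (ev x h) ^ p
  | [] => by simp [ev, (Fact.out : p.Prime).ne_zero]
  | a :: as => by
    simp only [ev]
    rw [add_pow_char, mul_pow, ev_frob x as, ← frobenius_def (p := p) (a : k), map_natCast]
    ring

lemma ev_replicate (x : k) (d : ℕ) : ev x (List.replicate d 0) = 0 := by
  induction d with
  | zero => rfl
  | succ d ih => simp [List.replicate_succ, ev, ih]

lemma ev_replicate_append {R : Type*} [CommSemiring R] (x : R) (d : ℕ) (l : List ℕ) :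
    ev x (List.replicate d 0 ++ l) = ev x l := by
  induction d with
  | zero => rfl
  | succ d ih => simp [List.replicate_succ, ev, ih]
end

/-- the unit vector -/
def oneL (d : ℕ) : List ℕ := List.replicate (d - 1) 0 ++ [1]

/-- power of `X` -/
noncomputable def powX (p : ℕ) (g : List ℕ) (m : ℕ) : List ℕ :=
  mulmod p g g (List.replicate m 0) (oneL g.length)

/-- product in the quotient -/
noncomputable def mulL (p : ℕ) (g a b : List ℕ) : List ℕ :=
  mulmod p g b a (List.replicate g.length 0)

/-- table of powers of `y` -/
noncomputable def tab (p : ℕ) (g y : List ℕ) (m : ℕ) : List ℕ → List (List ℕ) → List (List ℕ) :=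
  Nat.rec (fun _ T => T) (fun _ ih cur T => ih (mulL p g cur y) (List.cons cur T)) m

/-- iterate the Frobenius given by the table -/
noncomputable def frobIter (p : ℕ) (T : List (List ℕ)) (zero : List ℕ) (m : ℕ) :
    List ℕ → List ℕ :=
  Nat.rec (fun h => h) (fun _ ih h => ih (lincomb p h T zero)) m

/-- the Frobenius table -/
noncomputable def frobTab (p : ℕ) (g : List ℕ) : List (List ℕ) :=
  tab p g (powX p g p) g.length (oneL g.length) []

section
variable {k : Type*} [Field k] {p : ℕ} [CharP k p]

lemma oneL_spec (x : k) {d : ℕ} (hd : 0 < d) : (oneL d).length = d ∧ ev x (oneL d) = 1 := by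
  constructor
  · simp [oneL]; omega
  · rw [oneL, ev_replicate_append]; simp [ev]


lemma powX_spec (x : k) {g : List ℕ} (hg : x ^ g.length = ev x g) (hpos : 0 < g.length)
    (m : ℕ) : (powX p g m).length = g.length ∧ ev x (powX p g m) = x ^ m := by
  obtain ⟨h1, h2⟩ := oneL_spec x hpos
  obtain ⟨h3, h4⟩ := mulmod_spec (p := p) x g g hg rfl hpos (List.replicate m 0) _ h1
  exact ⟨h3, by rw [powX, h4, h2, ev_replicate]; simp⟩

lemma mulL_spec (x : k) {g : List ℕ} (hg : x ^ g.length = ev x g) (hpos : 0 < g.length)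
    (a b : List ℕ) (hb : b.length = g.length) :
    (mulL p g a b).length = g.length ∧ ev x (mulL p g a b) = ev x a * ev x b := by
  obtain ⟨h3, h4⟩ := mulmod_spec (p := p) x g b hg hb hpos a (List.replicate g.length 0) (by simp)
  exact ⟨h3, by rw [mulL, h4, ev_replicate]; simp⟩

lemma tab_spec (x : k) {g : List ℕ} (hg : x ^ g.length = ev x g) (hpos : 0 < g.length)
    (y : List ℕ) (hy : y.length = g.length) : ∀ (m : ℕ) (cur : List ℕ)
    (T : List (List ℕ)), cur.length = g.length → ev x cur = (ev x y) ^ T.length →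
    TabOK x (ev x y) g.length T →
    (tab p g y m cur T).length = m + T.length ∧ TabOK x (ev x y) g.length (tab p g y m cur T)
  | 0, cur, T, _, _, hT => ⟨by simp [tab], hT⟩
  | m + 1, cur, T, hc, hc', hT => by
    obtain ⟨h1, h2⟩ := mulL_spec (p := p) x hg hpos cur y hy
    have e : tab p g y (m + 1) cur T = tab p g y m (mulL p g cur y) (cur :: T) := rfl
    obtain ⟨h3, h4⟩ := tab_spec x hg hpos y hy m (mulL p g cur y) (cur :: T) h1
      (by rw [h2, hc', List.length_cons, pow_succ]) ⟨hc, hc', hT⟩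
    rw [e]
    exact ⟨by rw [h3, List.length_cons]; ring, h4⟩

lemma frobTab_spec (x : k) {g : List ℕ} (hg : x ^ g.length = ev x g) (hpos : 0 < g.length)
    : (frobTab p g).length = g.length ∧ TabOK x (x ^ p) g.length (frobTab p g) := by
  obtain ⟨h1, h2⟩ := powX_spec (p := p) x hg hpos p
  obtain ⟨h3, h4⟩ := oneL_spec x hpos
  have := tab_spec (p := p) x hg hpos (powX p g p) h1 g.length (oneL g.length) [] h3
    (by simp [h4]) trivial
  rw [h2] at this
  exact this

lemma frobIter_spec (x : k) {g : List ℕ} (hg : x ^ g.length = ev x g) (hpos : 0 < g.length)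
    [Fact p.Prime] : ∀ (m : ℕ) (h : List ℕ), h.length = g.length →
    (frobIter p (frobTab p g) (List.replicate g.length 0) m h).length = g.length ∧
    ev x (frobIter p (frobTab p g) (List.replicate g.length 0) m h) = (ev x h) ^ p ^ m
  | 0, h, hl => ⟨hl, by simp [frobIter]⟩
  | m + 1, h, hl => by
    obtain ⟨h1, h2⟩ := frobTab_spec (p := p) x hg hpos
    obtain ⟨h3, h4⟩ := lincomb_spec (p := p) x (x ^ p) g.length h (frobTab p g)
      (List.replicate g.length 0) (by rw [h1, hl]) h2 (by simp)
    obtain ⟨h5, h6⟩ := frobIter_spec x hg hpos m _ h3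
    refine ⟨h5, h6.trans ?_⟩
    rw [h4, ev_replicate, add_zero, ev_frob, ← pow_mul, pow_succ, mul_comm]

end

/-- certificate that roots of `X ^ d - g` are fixed by the `q`-th power of Frobenius -/
noncomputable def chkFix (p : ℕ) (g : List ℕ) (q : ℕ) : Bool :=
  eqL (frobIter p (frobTab p g) (List.replicate g.length 0) q (powX p g 1)) (powX p g 1)

/-- certificate that the roots of `X ^ d - g` are not fixed by small powers of Frobenius,
loop -/
noncomputable def chkNoFixAux (p : ℕ) (g : List ℕ) (T : List (List ℕ)) (X zero one : List ℕ)
    (ws : List (List ℕ)) : List ℕ → Bool :=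
  List.rec (fun _ => true) (fun w _ ih h =>
    Bool.rec false (ih (lincomb p h T zero))
      (eqL (mulL p g w (axpy p (p - 1) X (lincomb p h T zero))) one)) ws

/-- certificate that the roots of `X ^ d - g` are not fixed by small powers of Frobenius -/
noncomputable def chkNoFix (p : ℕ) (g : List ℕ) (ws : List (List ℕ)) : Bool :=
  chkNoFixAux p g (frobTab p g) (powX p g 1) (List.replicate g.length 0) (oneL g.length) ws
    (powX p g 1)

section
variable {k : Type*} [Field k] {p : ℕ} [CharP k p] [Fact p.Prime]

lemma chkFix_spec (x : k) {g : List ℕ} (hg : x ^ g.length = ev x g) (hpos : 0 < g.length)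
    (q : ℕ) (h : chkFix p g q = true) : x ^ p ^ q = x := by
  have e := eqL_eq _ _ h
  obtain ⟨h1, h2⟩ := powX_spec (p := p) x hg hpos 1
  obtain ⟨h3, h4⟩ := frobIter_spec (p := p) x hg hpos q _ h1
  rw [e, h2, pow_one] at h4
  exact h4.symm

lemma chkNoFixAux_spec (x : k) {g : List ℕ} (hg : x ^ g.length = ev x g) (hpos : 0 < g.length)
    : ∀ (ws : List (List ℕ)) (h : List ℕ) (s : ℕ), h.length = g.length →
    ev x h = x ^ p ^ s →
    chkNoFixAux p g (frobTab p g) (powX p g 1) (List.replicate g.length 0) (oneL g.length) ws h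
      = true → ∀ m, 0 < m → m ≤ ws.length → x ^ p ^ (s + m) ≠ x
  | [], _, _, _, _, _ => by intro m h1 h2; simp at h2; omega
  | w :: ws, h, s, hl, hh, hc => by
    intro m hm1 hm2
    obtain ⟨h1, h2⟩ := frobTab_spec (p := p) x hg hpos
    obtain ⟨h3, h4⟩ := lincomb_spec (p := p) x (x ^ p) g.length h (frobTab p g)
      (List.replicate g.length 0) (by rw [h1, hl]) h2 (by simp)
    obtain ⟨h5, h6⟩ := powX_spec (p := p) x hg hpos 1
    have h4' : ev x (lincomb p h (frobTab p g) (List.replicate g.length 0)) = x ^ p ^ (s + 1) := by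
      rw [h4, ev_replicate, add_zero, ev_frob, hh, ← pow_mul, pow_succ]
    change Bool.rec false (chkNoFixAux p g (frobTab p g) (powX p g 1) (List.replicate g.length 0)
      (oneL g.length) ws (lincomb p h (frobTab p g) (List.replicate g.length 0)))
      (eqL (mulL p g w (axpy p (p - 1) (powX p g 1)
        (lincomb p h (frobTab p g) (List.replicate g.length 0)))) (oneL g.length)) = true at hc
    cases hE : (eqL (mulL p g w (axpy p (p - 1) (powX p g 1)
        (lincomb p h (frobTab p g) (List.replicate g.length 0)))) (oneL g.length)) with
    | false => rw [hE] at hc; cases hc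
    | true =>
      rw [hE] at hc
      have ih := chkNoFixAux_spec x hg hpos ws _ (s + 1) h3 h4' hc
      rcases Nat.lt_or_ge 1 m with hm | hm
      · have := ih (m - 1) (by omega) (by simp at hm2; omega)
        rwa [show s + 1 + (m - 1) = s + m by omega] at this
      · obtain rfl : m = 1 := by omega
        intro hx
        obtain ⟨h7, h8⟩ := axpy_spec (p := p) x (p - 1) (powX p g 1)
          (lincomb p h (frobTab p g) (List.replicate g.length 0)) (by rw [h3, h5])
        obtain ⟨h9, h10⟩ := mulL_spec (p := p) x hg hpos w _ (h7.trans h5)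
        rw [eqL_eq _ _ hE, (oneL_spec x hpos).2, h8, h6, h4', hx,
          Nat.cast_sub (Fact.out : p.Prime).one_le] at h10
        simp at h10

lemma chkNoFix_spec (x : k) {g : List ℕ} (hg : x ^ g.length = ev x g) (hpos : 0 < g.length)
    (ws : List (List ℕ)) (h : chkNoFix p g ws = true) :
    ∀ m, 0 < m → m ≤ ws.length → x ^ p ^ m ≠ x := by
  obtain ⟨h5, h6⟩ := powX_spec (p := p) x hg hpos 1
  have := chkNoFixAux_spec (p := p) x hg hpos ws (powX p g 1) 0 h5 (by simp [h6]) h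
  simpa using this
end

/-- the element `X ^ e - G` of the quotient of dimension `d` -/
def eltOf (p d : ℕ) (G : List ℕ) : List ℕ :=
  List.replicate (d - G.length - 1) 0 ++ 1 :: G.map (fun c => (p - 1) * c)

/-- product of factors -/
noncomputable def prodL (p : ℕ) (g : List ℕ) (Gs : List (List ℕ)) : List ℕ :=
  List.rec (oneL g.length) (fun G _ ih => mulL p g (eltOf p g.length G) ih) Gs

/-- certificate that the product of the factors is zero -/
noncomputable def chkProd (p : ℕ) (g : List ℕ) (Gs : List (List ℕ)) : Bool :=
  eqL (prodL p g Gs) (List.replicate g.length 0)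

section
variable {k : Type*} [Field k] {p : ℕ} [CharP k p] [Fact p.Prime]

lemma ev_map (p : ℕ) [CharP k p] [Fact p.Prime] (x : k) :
    ∀ G : List ℕ, ev x (G.map (fun c => (p - 1) * c)) = - ev x G
  | [] => by simp [ev]
  | a :: as => by
    simp only [List.map_cons, ev, ev_map p x as, List.length_map]
    rw [Nat.cast_mul, Nat.cast_sub (Fact.out : p.Prime).one_le]
    simp
    ring


lemma prodL_spec (x : k) {g : List ℕ} (hg : x ^ g.length = ev x g) (hpos : 0 < g.length)
    : ∀ (Gs : List (List ℕ)), (prodL p g Gs).length = g.length ∧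
    (ev x (prodL p g Gs) = 0 → ∃ G ∈ Gs, x ^ G.length = ev x G)
  | [] => by
    refine ⟨(oneL_spec x hpos).1, fun h => ?_⟩
    rw [show prodL p g [] = oneL g.length from rfl, (oneL_spec x hpos).2] at h
    exact absurd h one_ne_zero
  | G :: Gs => by
    obtain ⟨h1, h2⟩ := prodL_spec x hg hpos Gs
    have e : prodL p g (G :: Gs) = mulL p g (eltOf p g.length G) (prodL p g Gs) := rfl
    obtain ⟨h3, h4⟩ := mulL_spec (p := p) x hg hpos (eltOf p g.length G) (prodL p g Gs) h1
    rw [e]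
    refine ⟨h3, fun h => ?_⟩
    rw [h4] at h
    rcases mul_eq_zero.mp h with h | h
    · refine ⟨G, by simp, ?_⟩
      rw [eltOf, ev_replicate_append, ev, ev_map] at h
      simp at h
      linear_combination h
    · obtain ⟨G', h5, h6⟩ := h2 h
      exact ⟨G', by simp [h5], h6⟩

lemma chkProd_spec (x : k) {g : List ℕ} (hg : x ^ g.length = ev x g) (hpos : 0 < g.length)
    (Gs : List (List ℕ)) (h : chkProd p g Gs = true) :
    ∃ G ∈ Gs, x ^ G.length = ev x G := by
  apply (prodL_spec (p := p) x hg hpos Gs).2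
  rw [eqL_eq _ _ h, ev_replicate]
end

lemma ev_degree {k : Type*} [Field k] : ∀ G : List ℕ, (ev (X : k[X]) G).degree < G.length
  | [] => by simp [ev]
  | a :: as => by
    refine (degree_add_le _ _).trans_lt (max_lt ?_ ((ev_degree as).trans ?_))
    · rw [← C_eq_natCast]
      refine (degree_C_mul_X_pow_le _ _).trans_lt ?_
      exact_mod_cast Nat.lt_succ_self _
    · exact_mod_cast Nat.lt_succ_self _

lemma ev_eval {k : Type*} [Field k] (x : k) : ∀ G : List ℕ, (ev (X : k[X]) G).eval x = ev x G
  | [] => by simp [ev]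
  | a :: as => by simp [ev, ev_eval x as]

lemma card_roots_le {k : Type*} [Field k] {n : ℕ} (ρ : Fin n → k) (hρ : Function.Injective ρ)
    (G : List ℕ) (s : Finset (Fin n)) (hs : ∀ i ∈ s, ρ i ^ G.length = ev (ρ i) G) :
    s.card ≤ G.length := by
  classical
  have hm : (X ^ G.length - ev (X : k[X]) G).Monic := monic_X_pow_sub (ev_degree G)
  have hd : (X ^ G.length - ev (X : k[X]) G).natDegree ≤ G.length := by
    refine natDegree_le_of_degree_le ((degree_sub_le _ _).trans (max_le ?_ (ev_degree G).le))
    exact degree_X_pow_le _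
  refine le_trans ?_ hd
  rw [← Finset.card_image_of_injective s hρ]
  refine (Finset.card_le_card ?_).trans ((Multiset.toFinset_card_le _).trans (card_roots' _))
  intro y hy
  obtain ⟨i, hi, rfl⟩ := Finset.mem_image.mp hy
  rw [Multiset.mem_toFinset, mem_roots hm.ne_zero, IsRoot]
  simp [ev_eval, hs i hi]
end

section
/-- product of the last `m` factors -/
def tailProd (a : ℤ) (n m : ℕ) : ℤ :=
  Nat.rec 1 (fun m ih => (a + 2 * ((n - m : ℕ) : ℤ)) * ih) m

lemma tailProd_eq (a : ℤ) (n : ℕ) : ∀ m, m ≤ n →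
    tailProd a n m = ∏ i ∈ Finset.Icc (n - m + 1) n, (a + 2 * (i : ℤ))
  | 0, _ => by simp [tailProd]
  | m + 1, h => by
    have ih := tailProd_eq a n m (by omega)
    have e : tailProd a n (m + 1) = (a + 2 * ((n - m : ℕ) : ℤ)) * tailProd a n m := rfl
    rw [e, ih, show n - (m + 1) + 1 = n - m by omega, 
      ← Finset.mul_prod_Ioc_eq_prod_Icc (a := n - m) (b := n) (by omega)]
    congr 2
    ext i
    simp only [Finset.mem_Icc, Finset.mem_Ioc]
    omega

/-- computable lower coefficients, negated, of the Laguerre polynomial mod `p` -/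
def lagList (p : ℕ) (a : ℤ) (n : ℕ) (m : ℕ) : List ℕ :=
  Nat.rec [] (fun j ih => List.cons
    (Int.toNat ((-((-1) ^ (n + j) * (((n.descFactorial j / j.factorial : ℕ) : ℤ)
      * tailProd a n (n - j)))) % (p : ℤ))) ih) m

lemma lagList_length (p : ℕ) (a : ℤ) (n m : ℕ) : (lagList p a n m).length = m := by
  induction m with
  | zero => rfl
  | succ m ih => exact congrArg Nat.succ ih

lemma cast_emod {k : Type*} [Field k] (p : ℕ) [CharP k p] (hp : p ≠ 0) (z : ℤ) :
    ((Int.toNat (z % (p : ℤ)) : ℕ) : k) = (z : k) := by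
  have h : ((Int.toNat (z % (p : ℤ)) : ℕ) : ℤ) = z % (p : ℤ) :=
    Int.toNat_of_nonneg (Int.emod_nonneg _ (by exact_mod_cast hp))
  rw [← Int.cast_natCast (R := k), h]
  conv_rhs => rw [← Int.emod_add_mul_ediv z (p : ℤ)]
  simp

lemma lagList_ev {k : Type*} [Field k] (p : ℕ) [CharP k p] (hp : p ≠ 0) (a : ℤ) (n : ℕ) (x : k) :
    ∀ m, m ≤ n → ev x (lagList p a n m) =
      - ∑ j ∈ Finset.range m, (((lagPoly a n).coeff j : ℤ) : k) * x ^ j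
  | 0, _ => by simp [lagList, ev]
  | m + 1, h => by
    have ih := lagList_ev p hp a n x m (by omega)
    have e : lagList p a n (m + 1) = (Int.toNat ((-((-1) ^ (n + m) *
      (((n.descFactorial m / m.factorial : ℕ) : ℤ)
      * tailProd a n (n - m)))) % (p : ℤ))) :: lagList p a n m := rfl
    rw [e, ev, cast_emod p hp, ih, lagList_length, Finset.sum_range_succ, lagPoly_coeff,
      lagCoeff, tailProd_eq a n _ (by omega), Nat.choose_eq_descFactorial_div_factorial,
      show n - (n - m) = m by omega]
    push_cast
    ring

lemma lagList_root {k : Type*} [Field k] (p : ℕ) [CharP k p] (hp : p ≠ 0) (a : ℤ) (n : ℕ) (x : k)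
    (hx : ((lagPoly a n).map (Int.castRingHom k)).eval x = 0) :
    x ^ n = ev x (lagList p a n n) := by
  rw [lagList_ev p hp a n x n le_rfl]
  rw [eval_map, eval₂_eq_sum_range, lagPoly_natDegree, Finset.sum_range_succ,
    lagPoly_coeff_self] at hx
  simp only [eq_intCast, Int.cast_one, one_mul] at hx
  linear_combination hx

lemma tau_pow {k : Type*} [Field k] {n p : ℕ} (τ : Equiv.Perm (Fin n)) (ρ : Fin n → k)
    (h : ∀ i, ρ (τ i) = ρ i ^ p) (m : ℕ) (i : Fin n) : ρ ((τ ^ m) i) = ρ i ^ p ^ m := by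
  induction m with
  | zero => simp
  | succ m ih => rw [pow_succ', Equiv.Perm.mul_apply, h, ih, ← pow_mul, pow_succ]

/-- first certificate: an element with a cycle of length `q` -/
noncomputable def cert1 (p : ℕ) (a : ℤ) (n q : ℕ) (F G G' : List ℕ) (w : List ℕ) : Bool :=
  eqL F (lagList p a n n) && chkProd p F [G, G'] && chkFix p G q && chkNoFix p G [w] &&
    Nat.beq G.length q && Nat.ble (G'.length + 1) n

lemma exists_root {k : Type*} [Field k] {n : ℕ} (ρ : Fin n → k) (hρ : Function.Injective ρ)
    (G G' : List ℕ) (h : ∀ i, ∃ L ∈ [G, G'], ρ i ^ L.length = ev (ρ i) L)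
    (hl : G'.length < n) : ∃ i, ρ i ^ G.length = ev (ρ i) G := by
  by_contra hcon
  push Not at hcon
  have := card_roots_le ρ hρ G' Finset.univ (by
    intro i _
    obtain ⟨L, hL, he⟩ := h i
    simp only [List.mem_cons, List.not_mem_nil, or_false] at hL
    rcases hL with rfl | rfl
    · exact absurd he (hcon i)
    · exact he)
  simp at this
  omega

theorem cert1_spec {n : ℕ} (H : Subgroup (Equiv.Perm (Fin n))) (p : ℕ) (hp : p.Prime) (a : ℤ)
    (q : ℕ) (hq : q.Prime) (F G G' w : List ℕ) (hH : HasFrob H (lagPoly a n) p)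
    (hc : cert1 p a n q F G G' w = true) : ∃ τ ∈ H, ∃ i, (τ ^ q) i = i ∧ τ i ≠ i := by
  obtain ⟨k, _, _, τ, ρ, hτ, hinj, hfrob, hroot⟩ := hH
  have : Fact p.Prime := ⟨hp⟩
  simp only [cert1, Bool.and_eq_true] at hc
  obtain ⟨⟨⟨⟨⟨h1, h2⟩, h3⟩, h4⟩, h5⟩, h6⟩ := hc
  have hF := eqL_eq _ _ h1
  have hG := Nat.eq_of_beq_eq_true h5
  have hG' := Nat.le_of_ble_eq_true h6
  have hFl : F.length = n := by rw [hF, lagList_length]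
  have hx : ∀ i, ρ i ^ F.length = ev (ρ i) F := fun i => by
    rw [hFl, hF]; exact lagList_root p hp.ne_zero a n _ (hroot i)
  obtain ⟨i, hi⟩ := exists_root ρ hinj G G'
    (fun i => chkProd_spec (p := p) (ρ i) (hx i) (by omega) _ h2) (by omega)
  have hpos : 0 < G.length := by rw [hG]; exact hq.pos
  refine ⟨τ, hτ, i, ?_, ?_⟩
  · apply hinj
    rw [tau_pow τ ρ hfrob]
    exact chkFix_spec (p := p) (ρ i) hi hpos q h3
  · intro h
    apply chkNoFix_spec (p := p) (ρ i) hi hpos [w] h4 1 one_pos (by simp)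
    rw [pow_one, ← hfrob, h]

/-- second certificate: an element without short cycles -/
noncomputable def cert2 (p : ℕ) (a : ℤ) (n q : ℕ) (F : List ℕ) (ws : List (List ℕ)) : Bool :=
  eqL F (lagList p a n n) && chkNoFix p F ws && Nat.ble (n - q) ws.length

theorem cert2_spec {n : ℕ} (H : Subgroup (Equiv.Perm (Fin n))) (p : ℕ) (hp : p.Prime) (a : ℤ)
    (q : ℕ) (F : List ℕ) (ws : List (List ℕ)) (hH : HasFrob H (lagPoly a n) p)
    (hc : cert2 p a n q F ws = true) :
    ∃ τ ∈ H, ∀ m, 0 < m → m ≤ n - q → ∀ i, (τ ^ m) i ≠ i := by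
  obtain ⟨k, _, _, τ, ρ, hτ, hinj, hfrob, hroot⟩ := hH
  have : Fact p.Prime := ⟨hp⟩
  simp only [cert2, Bool.and_eq_true] at hc
  obtain ⟨⟨h1, h2⟩, h3⟩ := hc
  have hF := eqL_eq _ _ h1
  have hFl : F.length = n := by rw [hF, lagList_length]
  have hw := Nat.le_of_ble_eq_true h3
  refine ⟨τ, hτ, fun m hm hmn i h => ?_⟩
  have hx : ρ i ^ F.length = ev (ρ i) F := by
    rw [hFl, hF]; exact lagList_root p hp.ne_zero a n _ (hroot i)
  apply chkNoFix_spec (p := p) (ρ i) hx (by have := Fin.pos i; omega) ws h2 m hm (by omega)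
  rw [← tau_pow τ ρ hfrob, h]

/-- each factor is fixed by the corresponding power of Frobenius, dividing `M` -/
noncomputable def chkAll (p M : ℕ) : List (ℕ × List ℕ) → Bool
  | [] => true
  | (d, G) :: L => (chkFix p G d && Nat.beq (M % d) 0 && Nat.ble 1 G.length) && chkAll p M L

lemma chkAll_spec (p M : ℕ) : ∀ L : List (ℕ × List ℕ), chkAll p M L = true →
    ∀ e ∈ L, chkFix p e.2 e.1 = true ∧ e.1 ∣ M ∧ 0 < e.2.length
  | [], _ => by simp
  | (d, G) :: L, h => by
    simp only [chkAll, Bool.and_eq_true] at h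
    obtain ⟨⟨⟨h1, h2⟩, h3⟩, h4⟩ := h
    intro e he
    rcases List.mem_cons.mp he with rfl | he
    · exact ⟨h1, Nat.dvd_of_mod_eq_zero (Nat.eq_of_beq_eq_true h2), Nat.le_of_ble_eq_true h3⟩
    · exact chkAll_spec p M L h4 e he

/-- third certificate: a power of an element is a three-cycle -/
noncomputable def cert3 (p : ℕ) (a : ℤ) (n M : ℕ) (F G G' w : List ℕ) (L : List (ℕ × List ℕ)) :
    Bool :=
  eqL F (lagList p a n n) && chkProd p F [G, G'] && chkFix p G 3 && chkNoFix p G [w] &&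
    Nat.beq G.length 3 && Nat.ble (G'.length + 1) n && chkProd p F (G :: L.map Prod.snd) &&
    chkAll p M L && Nat.beq (Nat.gcd 3 M) 1

theorem cert3_spec {n : ℕ} (H : Subgroup (Equiv.Perm (Fin n))) (p : ℕ) (hp : p.Prime) (a : ℤ)
    (M : ℕ) (F G G' w : List ℕ) (L : List (ℕ × List ℕ)) (hH : HasFrob H (lagPoly a n) p)
    (hc : cert3 p a n M F G G' w L = true) :
    ∃ g ∈ H, g ^ 3 = 1 ∧ g ≠ 1 ∧ g.support.card ≤ 3 := by
  classical
  obtain ⟨k, _, _, τ, ρ, hτ, hinj, hfrob, hroot⟩ := hH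
  have : Fact p.Prime := ⟨hp⟩
  simp only [cert3, Bool.and_eq_true] at hc
  obtain ⟨⟨⟨⟨⟨⟨⟨⟨h1, h2⟩, h3⟩, h4⟩, h5⟩, h6⟩, h7⟩, h8⟩, h9⟩ := hc
  have hF := eqL_eq _ _ h1
  have hG := Nat.eq_of_beq_eq_true h5
  have hG' := Nat.le_of_ble_eq_true h6
  have hcop : Nat.Coprime 3 M := Nat.eq_of_beq_eq_true h9
  have hFl : F.length = n := by rw [hF, lagList_length]
  have hx : ∀ i, ρ i ^ F.length = ev (ρ i) F := fun i => by
    rw [hFl, hF]; exact lagList_root p hp.ne_zero a n _ (hroot i)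
  obtain ⟨i₀, hi₀⟩ := exists_root ρ hinj G G'
    (fun i => chkProd_spec (p := p) (ρ i) (hx i) (by omega) _ h2) (by omega)
  have hpos : 0 < G.length := by omega
  have hfix3 : ∀ i, ρ i ^ G.length = ev (ρ i) G → (τ ^ 3) i = i := by
    intro i hi
    apply hinj
    rw [tau_pow τ ρ hfrob]
    exact chkFix_spec (p := p) (ρ i) hi hpos 3 h3
  have hpow : ∀ (d : ℕ) (i : Fin n), (τ ^ d) i = i → ∀ e, d ∣ e → (τ ^ e) i = i := by
    rintro d i hd _ ⟨c, rfl⟩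
    rw [pow_mul]
    exact Equiv.Perm.pow_apply_eq_self_of_apply_eq_self hd c
  have hfixM : ∀ i, ¬ ρ i ^ G.length = ev (ρ i) G → (τ ^ M) i = i := by
    intro i hi
    obtain ⟨G1, hG1, hr⟩ := chkProd_spec (p := p) (ρ i) (hx i) (by have := Fin.pos i; omega) _ h7
    rcases List.mem_cons.mp hG1 with rfl | hG1
    · exact absurd hr hi
    · obtain ⟨e, he, rfl⟩ := List.mem_map.mp hG1
      obtain ⟨ha, hb, hc⟩ := chkAll_spec p M L h8 e he
      refine hpow e.1 i ?_ M hb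
      apply hinj
      rw [tau_pow τ ρ hfrob]
      exact chkFix_spec (p := p) (ρ i) hr hc _ ha
  refine ⟨τ ^ M, H.pow_mem hτ M, ?_, ?_, ?_⟩
  · ext i : 1
    rw [Equiv.Perm.one_apply, ← pow_mul]
    by_cases hi : ρ i ^ G.length = ev (ρ i) G
    · exact hpow 3 i (hfix3 i hi) _ (dvd_mul_left _ _)
    · exact hpow M i (hfixM i hi) _ (dvd_mul_right _ _)
  · intro h
    have hM : (τ ^ M) i₀ = i₀ := by rw [h]; rfl
    have h31 := hfix3 i₀ hi₀
    have hmin : Function.minimalPeriod τ i₀ ∣ 1 := by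
      rw [← hcop]
      refine Nat.dvd_gcd ?_ ?_ <;> apply Function.IsPeriodicPt.minimalPeriod_dvd <;>
        rw [Function.IsPeriodicPt, Function.IsFixedPt, Equiv.Perm.iterate_eq_pow] <;> assumption
    have hone : τ i₀ = i₀ :=
      Function.minimalPeriod_eq_one_iff_isFixedPt.mp (Nat.dvd_one.mp hmin)
    apply chkNoFix_spec (p := p) (ρ i₀) hi₀ hpos [w] h4 1 one_pos (by simp)
    rw [pow_one, ← hfrob, hone]
  · rw [← hG]
    apply card_roots_le ρ hinj G
    intro i hi
    by_contra hcon
    exact (Equiv.Perm.mem_support.mp hi) (hfixM i hcon)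
end

section
lemma laguerre_eq (n : ℕ) (u : ℤ) : laguerre n u =
    C (((2 : ℚ) ^ n * (n.factorial : ℚ))⁻¹) *
      ((lagPoly (2 * u + 1) n).map (Int.castRingHom ℚ)).comp (C 2 * X) := by
  rw [laguerre, lagPoly, Polynomial.map_sum, Polynomial.sum_comp, Finset.smul_sum,
    Finset.mul_sum]
  refine Finset.sum_congr rfl fun j hj => ?_
  have hj : j ≤ n := by simpa [Nat.lt_succ_iff] using hj
  have hprod : (∏ i ∈ Finset.Icc (j + 1) n, ((u : ℚ) + 1 / 2 + (i : ℚ))) =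
      (∏ i ∈ Finset.Icc (j + 1) n, (((2 * u + 1 : ℤ) : ℚ) + 2 * (i : ℚ))) / 2 ^ (n - j) := by
    rw [eq_div_iff (by positivity)]
    have : (2 : ℚ) ^ (n - j) = ∏ i ∈ Finset.Icc (j + 1) n, (2 : ℚ) := by
      rw [Finset.prod_const, Nat.card_Icc]; congr 1; omega
    rw [this, ← Finset.prod_mul_distrib]
    refine Finset.prod_congr rfl fun i _ => ?_
    push_cast; ring
  have hch : (n.choose j : ℚ) = n.factorial / (j.factorial * (n - j).factorial) :=
    Nat.cast_choose ℚ hj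
  have hpow : (2 : ℚ) ^ n = 2 ^ (n - j) * 2 ^ j := by rw [← pow_add]; congr 1; omega
  rw [hprod]
  simp only [Polynomial.map_mul, Polynomial.map_pow, map_X, map_C, mul_comp, C_comp, pow_comp,
    X_comp, mul_pow, ← C_pow, smul_eq_C_mul]
  have hX : (-X : ℚ[X]) ^ j = C ((-1) ^ j) * X ^ j := by
    rw [neg_pow, C_pow, C_neg, C_1]
  rw [hX]
  simp only [← mul_assoc, ← C_mul]
  congr 2
  simp only [lagCoeff, eq_intCast, Int.cast_mul, Int.cast_pow, Int.cast_neg, Int.cast_one,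
    Int.cast_natCast, Int.cast_prod, Int.cast_add, Int.cast_ofNat]
  rw [hch, hpow, pow_add]
  have h1 : (n.factorial : ℚ) ≠ 0 := by positivity
  have h2 : (j.factorial : ℚ) ≠ 0 := by positivity
  have h3 : ((n - j).factorial : ℚ) ≠ 0 := by positivity
  field_simp

lemma irreducible_of {K : Type*} [Field K] [Algebra ℚ K] {n : ℕ} (hn : 0 < n) (P : ℚ[X])
    (hP : P.Monic) (hPd : P.natDegree = n) (r : Fin n → K) (hinj : Function.Injective r)
    (hr : ∀ i, aeval (r i) P = 0) (htrans : ∀ i j, ∃ σ : K ≃ₐ[ℚ] K, σ (r i) = r j) :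
    Irreducible P := by
  classical
  let i₀ : Fin n := ⟨0, hn⟩
  have hInt : IsIntegral ℚ (r i₀) := ⟨P, hP, hr i₀⟩
  have hdvd : minpoly ℚ (r i₀) ∣ P := minpoly.dvd ℚ _ (hr i₀)
  have hne : (minpoly ℚ (r i₀)) ≠ 0 := minpoly.ne_zero hInt
  have hle : n ≤ (minpoly ℚ (r i₀)).natDegree := by
    have h1 : (Finset.univ.image r).card = n := by
      rw [Finset.card_image_of_injective _ hinj]; simp
    rw [← h1, ← natDegree_map (algebraMap ℚ K)]
    refine (Finset.card_le_card ?_).trans ((Multiset.toFinset_card_le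
      ((minpoly ℚ (r i₀)).map (algebraMap ℚ K)).roots).trans (card_roots' _))
    intro y hy
    obtain ⟨i, -, rfl⟩ := Finset.mem_image.mp hy
    obtain ⟨σ, hσ⟩ := htrans i₀ i
    rw [Multiset.mem_toFinset, mem_roots (map_ne_zero hne), IsRoot, eval_map_algebraMap, ← hσ,
      aeval_algHom_apply, minpoly.aeval, map_zero]
  have := eq_of_monic_of_dvd_of_natDegree_le (minpoly.monic hInt) hP hdvd (by rw [hPd]; exact hle)
  rw [this]
  exact minpoly.irreducible hInt

lemma laguerre_map (K : Type*) [Field K] [Algebra ℚ K] (n : ℕ) (u : ℤ) :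
    (laguerre n u).map (algebraMap ℚ K) =
      C (algebraMap ℚ K (((2 : ℚ) ^ n * (n.factorial : ℚ))⁻¹)) *
      ((lagPoly (2 * u + 1) n).map (Int.castRingHom K)).comp (C 2 * X) := by
  rw [laguerre_eq, Polynomial.map_mul, map_C, map_comp, Polynomial.map_mul, map_X, map_C,
    Polynomial.map_map]
  have h1 : (algebraMap ℚ K).comp (Int.castRingHom ℚ) = Int.castRingHom K := RingHom.ext_int _ _
  rw [h1, map_ofNat]

lemma laguerre_irreducible_of (n : ℕ) (u : ℤ)
    (h : Irreducible ((lagPoly (2 * u + 1) n).map (Int.castRingHom ℚ))) :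
    Irreducible (laguerre n u) := by
  rw [laguerre_eq]
  have hc : IsUnit (C (((2 : ℚ) ^ n * (n.factorial : ℚ))⁻¹)) :=
    isUnit_C.mpr (IsUnit.mk0 _ (by positivity))
  rw [irreducible_isUnit_mul hc]
  let _ : Invertible (2 : ℚ) := invertibleOfNonzero two_ne_zero
  have := (MulEquiv.irreducible_iff (algEquivCMulXAddC (2 : ℚ) 0)).mpr h
  simpa [algEquivCMulXAddC_apply, Polynomial.comp, aeval_def] using this

lemma exists_roots {K : Type*} [Field K] (P : K[X]) (hP : P.Monic) (hs : P.Splits) (n : ℕ)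
    (hn : P.natDegree = n) : ∃ r : Fin n → K, P = ∏ i, (X - C (r i)) := by
  have hcard : P.roots.toList.length = n := by
    rw [Multiset.length_toList, ← hs.natDegree_eq_card_roots, hn]
  subst hcard
  refine ⟨fun i => P.roots.toList.get i, ?_⟩
  conv_lhs => rw [hs.eq_prod_roots_of_monic hP, ← Multiset.coe_toList P.roots]
  rw [Multiset.map_coe, Multiset.prod_coe, ← List.prod_ofFn]
  congr 1
  conv_lhs => rw [← List.ofFn_get P.roots.toList, List.map_ofFn]
  rfl

theorem main_of (m : ℕ) (u a : ℤ) (ha : a = 2 * u + 1) (s : ℤ)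
    (hm : Even ((m + 1) * m / 2))
    (hs : tailProd a (m + 1) (m + 1) * (s * s) =
      (((m : ℤ) + 1) * (2 * (m + 1) + a)) ^ (m + 1) * lagRes a m) (hs0 : s ≠ 0)
    (hn2 : 2 ≤ m + 1) (q : ℕ) (hq : q.Prime) (hqn : m + 1 < 2 * q)
    (p1 p2 p3 : ℕ) (hp1 : p1.Prime) (hp2 : p2.Prime) (hp3 : p3.Prime)
    (h1s : ¬ (p1 : ℤ) ∣ s) (h2s : ¬ (p2 : ℤ) ∣ s) (h3s : ¬ (p3 : ℤ) ∣ s)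
    (F G G' w : List ℕ) (hc1 : cert1 p1 a (m + 1) q F G G' w = true)
    (F2 : List ℕ) (ws : List (List ℕ)) (hc2 : cert2 p2 a (m + 1) q F2 ws = true)
    (N : ℕ) (F3 G3 G3' w3 : List ℕ) (L : List (ℕ × List ℕ))
    (hc3 : cert3 p3 a (m + 1) N F3 G3 G3' w3 L = true) :
    Irreducible (laguerre (m + 1) u) ∧
      Nonempty ((laguerre (m + 1) u).Gal ≃* alternatingGroup (Fin (m + 1))) := by
  subst ha
  set n := m + 1 with hn
  let K := (laguerre n u).SplittingField
  have : NumberField K := { to_charZero := inferInstance, to_finiteDimensional := inferInstance }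
  have : Normal ℚ K := by
    have : IsSplittingField ℚ K (laguerre n u) := IsSplittingField.splittingField _
    exact Normal.of_isSplittingField (laguerre n u)
  have : IsGalois ℚ K := ⟨⟩
  let P := lagPoly (2 * u + 1) n
  have hPm : P.Monic := lagPoly_monic _ _
  have hlagK : (laguerre n u).map (algebraMap ℚ K) =
      C (algebraMap ℚ K (((2 : ℚ) ^ n * (n.factorial : ℚ))⁻¹)) *
      (P.map (Int.castRingHom K)).comp (C 2 * X) := laguerre_map K n u
  have hc0 : (algebraMap ℚ K (((2 : ℚ) ^ n * (n.factorial : ℚ))⁻¹)) ≠ 0 := by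
    rw [Ne, map_eq_zero]; positivity
  have hsplit : (P.map (Int.castRingHom K)).Splits := by
    have h0 : ((laguerre n u).map (algebraMap ℚ K)).Splits := SplittingField.splits _
    rw [hlagK] at h0
    have h1 := (h0.comp_of_natDegree_le_one (g := C (2⁻¹) * X) (by compute_degree))
    rw [mul_comp, comp_assoc, C_comp] at h1
    have e : (C (2 : K) * X).comp (C 2⁻¹ * X) = X := by
      rw [mul_comp, C_comp, X_comp, ← mul_assoc, ← C_mul]; simp
    rw [e, comp_X] at h1
    exact h1.of_dvd (mul_ne_zero (C_ne_zero.mpr hc0) (hPm.map _).ne_zero) (dvd_mul_left _ _)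
  obtain ⟨r, hr⟩ := exists_roots _ (hPm.map (Int.castRingHom K)) hsplit n
    (by rw [hPm.natDegree_map, lagPoly_natDegree])
  have hroot : ∀ i, (P.map (Int.castRingHom K)).eval (r i) = 0 := by
    intro i
    rw [hr, eval_prod]
    exact Finset.prod_eq_zero (Finset.mem_univ i) (by simp)
  have hroot' : ∀ z, (P.map (Int.castRingHom K)).eval z = 0 → ∃ i, r i = z := by
    intro z hz
    rw [hr, eval_prod, Finset.prod_eq_zero_iff] at hz
    obtain ⟨i, -, hi⟩ := hz
    exact ⟨i, by simpa [sub_eq_zero, eq_comm] using hi⟩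
  have hV : (Matrix.vandermonde r).det ^ 2 = (s : K) ^ 2 := by
    have h := vandermonde_sq (2 * u + 1) m r hr hm
    rw [← hs, tailProd_eq _ _ _ le_rfl, Nat.sub_self, zero_add, Int.cast_mul] at h
    have hne : ((∏ i ∈ Finset.Icc 1 (m + 1), (2 * u + 1 + 2 * (i : ℤ)) : ℤ) : K) ≠ 0 := by
      rw [Ne, Int.cast_eq_zero, Finset.prod_eq_zero_iff]
      rintro ⟨i, -, hi⟩
      omega
    have := mul_left_cancel₀ hne h
    rw [this]; push_cast; ring
  have hs0K : (s : K) ≠ 0 := by exact_mod_cast hs0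
  have hV0 : (Matrix.vandermonde r).det ≠ 0 := by
    intro h
    rw [h, zero_pow two_ne_zero] at hV
    exact pow_ne_zero 2 hs0K hV.symm
  have hinj : Function.Injective r := Matrix.det_vandermonde_ne_zero_iff.mp hV0
  have hσ : ∀ (σ : K ≃ₐ[ℚ] K) (z : K), (P.map (Int.castRingHom K)).eval z = 0 →
      (P.map (Int.castRingHom K)).eval (σ z) = 0 := by
    intro σ z hz
    rw [eval_map] at hz ⊢
    have := congrArg σ hz
    rw [map_zero] at this
    rw [← this]
    have h2 := hom_eval₂ P (Int.castRingHom K) (σ : K →+* K) z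
    have h3 : ((σ : K →+* K).comp (Int.castRingHom K)) = Int.castRingHom K := RingHom.ext_int _ _
    rw [h3] at h2
    exact h2.symm
  choose f hf using fun (σ : K ≃ₐ[ℚ] K) (i : Fin n) => hroot' (σ (r i)) (hσ σ _ (hroot i))
  have hfinj : ∀ σ, Function.Injective (f σ) := by
    intro σ i j hij
    have := congrArg r hij
    rw [hf, hf] at this
    exact hinj (σ.injective this)
  let φ : (K ≃ₐ[ℚ] K) →* Equiv.Perm (Fin n) := MonoidHom.mk'
    (fun σ => Equiv.ofBijective (f σ) (Finite.injective_iff_bijective.mp (hfinj σ))) (by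
      intro σ τ
      ext i : 1
      apply hinj
      simp only [Equiv.ofBijective_apply, Equiv.Perm.mul_apply, hf, AlgEquiv.mul_apply])
  have hφ : ∀ σ i, r (φ σ i) = σ (r i) := hf
  have hφinj : Function.Injective φ := by
    rw [injective_iff_map_eq_one]
    intro σ h
    refine Polynomial.Gal.ext (p := laguerre n u) (σ := σ) (τ := (1 : K ≃ₐ[ℚ] K)) ?_
    intro x hx
    have hx0 : ((laguerre n u).map (algebraMap ℚ K)).eval x = 0 := by
      rw [eval_map_algebraMap]
      exact (mem_rootSet.mp hx).2
    rw [hlagK, eval_mul, eval_C, mul_eq_zero, or_iff_right hc0, eval_comp] at hx0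
    obtain ⟨i, hi⟩ := hroot' _ hx0
    have h2 := hφ σ i
    rw [h, Equiv.Perm.one_apply, hi] at h2
    rw [eval_mul, eval_C, eval_X, map_mul, map_ofNat] at h2
    exact (mul_left_cancel₀ two_ne_zero h2).symm
  have hfr : ∀ p : ℕ, p.Prime → ¬ (p : ℤ) ∣ s → HasFrob φ.range P p := fun p hp hps =>
    hasFrob_of_galois P hPm r hroot φ hφ s hV p hp hps
  have k1 := cert1_spec φ.range p1 hp1 _ q hq F G G' w (hfr p1 hp1 h1s) hc1
  have k2 := cert2_spec φ.range p2 hp2 _ q F2 ws (hfr p2 hp2 h2s) hc2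
  have k3 := cert3_spec φ.range p3 hp3 _ N F3 G3 G3' w3 L (hfr p3 hp3 h3s) hc3
  have htr := pretransitive_of φ.range q hq k1 k2
  have hle := alternating_le_of φ.range q hq hqn k1 k3
  have hge : φ.range ≤ alternatingGroup (Fin n) := by
    rintro _ ⟨σ, rfl⟩
    rw [Equiv.Perm.mem_alternatingGroup]
    have hfix : σ (Matrix.vandermonde r).det = (Matrix.vandermonde r).det := by
      rcases sq_eq_sq_iff_eq_or_eq_neg.mp hV with h | h <;> rw [h]
      · exact map_intCast σ s
      · rw [map_neg, map_intCast σ s]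
    have hperm : σ (Matrix.vandermonde r).det =
        (Equiv.Perm.sign (φ σ) : ℤ) * (Matrix.vandermonde r).det := by
      rw [← Matrix.det_permute, AlgEquiv.map_det]
      congr 1
      ext i j
      simp [Matrix.vandermonde_apply, hφ]
    rw [hfix] at hperm
    rcases Int.units_eq_one_or (Equiv.Perm.sign (φ σ)) with h | h
    · exact h
    · exfalso
      rw [h] at hperm
      rw [Units.val_neg, Units.val_one, Int.cast_neg, Int.cast_one, neg_one_mul] at hperm
      exact hV0 (self_eq_neg.mp hperm)
  have heq : φ.range = alternatingGroup (Fin n) := le_antisymm hge hle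
  constructor
  · apply laguerre_irreducible_of
    apply irreducible_of (K := K) (n := n) (by omega) _ (hPm.map _)
      (by rw [hPm.natDegree_map, lagPoly_natDegree]) r hinj
    · intro i
      rw [← eval_map_algebraMap, Polynomial.map_map]
      have := hroot i
      rwa [RingHom.ext_int ((algebraMap ℚ K).comp (Int.castRingHom ℚ)) (Int.castRingHom K)]
    · intro i j
      obtain ⟨⟨_, σ, rfl⟩, hg⟩ := htr.exists_smul_eq i j
      refine ⟨σ, ?_⟩
      rw [← hφ]
      exact congrArg r hg
  · refine ⟨?_⟩
    show (K ≃ₐ[ℚ] K) ≃* alternatingGroup (Fin n)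
    exact (MonoidHom.ofInjective hφinj).trans (MulEquiv.subgroupCongr heq)
end

section
set_option maxRecDepth 100000

lemma cert_8_5_a : cert1 29 (-9) 8 7
    [27, 6, 22, 16, 7, 25, 15, 24]
    [16, 8, 23, 8, 8, 26, 11]
    [11]
    [19, 10, 6, 5, 3, 6, 7]
    = true := by decide +kernel

lemma cert_8_5_b : cert2 11 (-9) 8 7
    [1, 10, 6, 9, 5, 2, 6, 8]
    [[10, 9, 5, 10, 8, 10, 10, 0]]
    = true := by decide +kernel

lemma cert_8_5_c : cert3 13 (-9) 8 5
    [4, 8, 4, 8, 9, 7, 10, 12]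
    [1, 5, 9]
    [3, 6, 3, 3, 3]
    [10, 12, 6]
    [(5, [3, 6, 3, 3, 3])]
    = true := by decide +kernel

lemma cert_8_6_a : cert1 11 (-11) 8 7
    [7, 9, 4, 5, 1, 8, 5, 7]
    [8, 1, 3, 2, 10, 9, 7]
    [10]
    [2, 3, 10, 1, 10, 5, 6]
    = true := by decide +kernel

lemma cert_8_6_b : cert2 17 (-11) 8 7
    [6, 5, 7, 13, 4, 10, 3, 14]
    [[10, 15, 11, 1, 1, 1, 3, 14]]
    = true := by decide +kernel

lemma cert_8_6_c : cert3 17 (-11) 8 5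
    [6, 5, 7, 13, 4, 10, 3, 14]
    [14, 3, 2]
    [9, 9, 5, 9, 10]
    [12, 12, 5]
    [(5, [9, 9, 5, 9, 10])]
    = true := by decide +kernel

lemma cert_9_5_a : cert1 11 (-9) 9 7
    [4, 9, 5, 5, 6, 4, 2, 8, 5]
    [9, 3, 2, 10, 10, 4, 10]
    [6, 5]
    [7, 0, 9, 4, 8, 4, 8]
    = true := by decide +kernel

lemma cert_9_5_b : cert2 13 (-9) 9 7
    [3, 7, 5, 10, 3, 2, 10, 6, 9]
    [[4, 9, 7, 6, 10, 8, 2, 1, 2],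
     [0, 11, 12, 9, 4, 3, 8, 2, 2]]
    = true := by decide +kernel

lemma cert_9_5_c : cert3 19 (-9) 9 5
    [5, 12, 12, 3, 16, 17, 11, 9, 7]
    [18, 6, 13]
    [6, 0, 16, 8, 9, 17]
    [13, 15, 12]
    [(1, [2]),
     (5, [4, 8, 13, 15, 1])]
    = true := by decide +kernel

lemma cert_9_6_a : cert1 19 (-11) 9 7
    [6, 13, 4, 13, 13, 7, 15, 12, 12]
    [4, 6, 0, 8, 10, 14, 3]
    [2, 15]
    [3, 14, 9, 0, 0, 10, 12]
    = true := by decide +kernel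

lemma cert_9_6_b : cert2 11 (-11) 9 7
    [8, 5, 9, 3, 3, 6, 5, 6, 6]
    [[10, 7, 9, 6, 8, 10, 4, 10, 1],
     [6, 4, 0, 9, 0, 6, 1, 7, 7]]
    = true := by decide +kernel

lemma cert_9_6_c : cert3 13 (-11) 9 5
    [11, 1, 6, 4, 4, 8, 6, 4, 4]
    [11, 9, 2]
    [0, 5, 7, 9, 7, 11]
    [2, 8, 10]
    [(1, [10]),
     (5, [3, 9, 6, 4, 8])]
    = true := by decide +kernel

lemma cert_16_9_a : cert1 19 (-17) 16 13
    [12, 8, 1, 4, 5, 8, 1, 6, 18, 15, 15, 1, 13, 13, 1, 14]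
    [1, 11, 6, 16, 16, 11, 11, 14, 9, 13, 9, 9, 10]
    [11, 8, 10]
    [2, 4, 5, 7, 15, 14, 9, 18, 4, 3, 8, 16, 16]
    = true := by decide +kernel

lemma cert_16_9_b : cert2 31 (-17) 16 13
    [23, 5, 12, 21, 13, 10, 28, 15, 3, 28, 20, 17, 28, 4, 9, 22]
    [[14, 13, 11, 16, 20, 16, 7, 29, 28, 20, 4, 14, 3, 13, 10, 14],
     [24, 24, 10, 18, 11, 15, 12, 2, 16, 30, 10, 1, 2, 11, 23, 23],
     [23, 28, 6, 1, 28, 15, 11, 15, 17, 22, 0, 20, 19, 26, 6, 21]]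
    = true := by decide +kernel

lemma cert_16_9_c : cert3 17 (-17) 16 28
    [2, 9, 14, 7, 15, 7, 4, 4, 13, 12, 8, 12, 11, 15, 9, 1]
    [7, 15, 15]
    [12, 10, 11, 6, 15, 10, 15, 8, 2, 14, 1, 4, 9]
    [5, 12, 2]
    [(2, [5, 5]),
     (4, [11, 8, 10, 11]),
     (7, [13, 5, 4, 7, 6, 11, 15])]
    = true := by decide +kernel

lemma cert_16_10_a : cert1 83 (-19) 16 13
    [42, 21, 31, 21, 80, 58, 12, 55, 36, 43, 51, 46, 28, 78, 73, 62]
    [61, 24, 9, 19, 10, 29, 13, 33, 20, 80, 62, 65, 12]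
    [64, 0, 64]
    [74, 51, 73, 68, 20, 59, 53, 32, 62, 23, 48, 24, 55]
    = true := by decide +kernel

lemma cert_16_10_b : cert2 29 (-19) 16 13
    [5, 8, 12, 17, 28, 20, 17, 1, 22, 19, 4, 15, 24, 13, 26, 24]
    [[18, 17, 21, 16, 0, 0, 25, 25, 8, 13, 9, 11, 24, 14, 15, 11],
     [16, 26, 9, 27, 10, 15, 26, 26, 11, 7, 21, 6, 10, 1, 5, 5],
     [4, 12, 11, 14, 27, 18, 10, 0, 28, 15, 16, 15, 3, 13, 17, 0]]
    = true := by decide +kernel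

lemma cert_16_10_c : cert3 31 (-19) 16 10
    [22, 14, 1, 16, 25, 2, 6, 30, 18, 1, 1, 27, 27, 11, 22, 4]
    [5, 30, 22]
    [17, 7, 28, 27, 7, 6, 3, 7, 27, 9, 18, 20, 28]
    [13, 5, 0]
    [(1, [2]),
     (2, [18, 29]),
     (10, [28, 16, 24, 11, 30, 5, 30, 10, 6, 24])]
    = true := by decide +kernel

lemma cert_24_13_a : cert1 107 (-25) 24 23
    [17, 14, 11, 8, 55, 72, 27, 32, 6, 62, 94, 23, 13, 23, 41, 21, 26, 28, 53, 65, 78, 27, 40, 74]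
    [23, 90, 6, 79, 9, 18, 26, 90, 1, 56, 79, 84, 44, 80, 96, 87, 39, 8, 5, 35, 82, 70, 48]
    [101]
    [48, 60, 73, 104, 87, 98, 38, 87, 25, 40, 64, 34, 39, 19, 39, 2, 57, 41, 53, 3, 38, 43, 34]
    = true := by decide +kernel

lemma cert_24_13_b : cert2 29 (-25) 24 23
    [1, 5, 9, 16, 26, 22, 24, 5, 28, 22, 3, 4, 26, 24, 22, 25, 24, 6, 17, 13, 20, 7, 9, 5]
    [[13, 26, 25, 14, 15, 3, 22, 18, 3, 20, 24, 27, 17, 17, 5, 27, 26, 21, 3, 6, 11, 17, 13, 18]]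
    = true := by decide +kernel

lemma cert_24_13_c : cert3 67 (-25) 24 44
    [16, 22, 39, 20, 6, 21, 9, 54, 65, 15, 28, 59, 39, 1, 48, 55, 28, 23, 38, 42, 2, 60, 28, 38]
    [45, 25, 38]
    [38, 32, 46, 46, 20, 0, 46, 3, 10, 10, 38, 54, 47, 19, 43, 30, 26, 26, 50, 44, 66]
    [8, 25, 9]
    [(1, [65, 55]),
     (4, [61, 39, 23, 3, 48, 64, 6, 39]),
     (11, [46, 51, 31, 40, 38, 1, 51, 27, 14, 28, 66])]
    = true := by decide +kernel

lemma cert_24_14_a : cert1 29 (-27) 24 23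
    [11, 18, 18, 18, 21, 8, 22, 28, 25, 18, 14, 20, 13, 20, 16, 23, 15, 13, 28, 3, 15, 10, 20, 16]
    [1, 28, 8, 11, 15, 13, 7, 11, 19, 5, 6, 22, 1, 1, 26, 22, 3, 14, 23, 1, 25, 28, 10]
    [10]
    [9, 15, 4, 27, 5, 8, 17, 15, 7, 27, 12, 9, 17, 6, 1, 14, 23, 14, 10, 9, 12, 18, 16]
    = true := by decide +kernel

lemma cert_24_14_b : cert2 31 (-27) 24 23
    [8, 19, 8, 21, 24, 1, 30, 11, 9, 6, 29, 3, 25, 3, 14, 5, 4, 3, 24, 9, 6, 20, 9, 21]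
    [[20, 18, 27, 0, 7, 3, 25, 8, 15, 17, 18, 30, 16, 11, 10, 27, 7, 22, 19, 23, 22, 0, 22, 13]]
    = true := by decide +kernel

lemma cert_24_14_c : cert3 101 (-27) 24 19
    [100, 67, 64, 10, 86, 68, 100, 78, 81, 90, 14, 32, 42, 64, 63, 98, 32, 72, 54, 78, 37, 83, 65, 13]
    [44, 83, 41]
    [56, 24, 71, 49, 29, 40, 14, 52, 20, 2, 56, 48, 16, 79, 68, 1, 71, 7, 34, 16, 12]
    [86, 86, 68]
    [(1, [96, 42]),
     (19, [61, 81, 6, 88, 43, 87, 72, 13, 50, 96, 60, 43, 99, 77, 3, 89, 55, 36, 43])]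
    = true := by decide +kernel

lemma cert_25_13_a : cert1 67 (-25) 25 23
    [22, 25, 62, 20, 46, 45, 1, 59, 2, 58, 37, 38, 29, 44, 3, 1, 51, 3, 58, 52, 23, 65, 30, 19, 55]
    [23, 57, 13, 21, 47, 49, 47, 64, 33, 56, 42, 65, 66, 21, 37, 15, 11, 38, 18, 21, 17, 32, 1]
    [66, 12]
    [43, 16, 62, 45, 11, 38, 33, 33, 9, 64, 0, 37, 55, 21, 51, 34, 54, 13, 51, 32, 19, 41, 4]
    = true := by decide +kernel

lemma cert_25_13_b : cert2 31 (-25) 25 23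
    [5, 15, 3, 12, 5, 29, 13, 27, 6, 1, 27, 14, 17, 19, 17, 26, 7, 28, 27, 3, 24, 15, 21, 29, 18]
    [[2, 6, 30, 21, 8, 11, 28, 12, 12, 18, 6, 13, 9, 22, 16, 7, 24, 10, 1, 15, 5, 14, 14, 6, 26],
     [20, 28, 5, 30, 0, 27, 11, 21, 1, 0, 18, 27, 5, 6, 16, 20, 18, 29, 18, 7, 13, 17, 9, 18, 23]]
    = true := by decide +kernel

lemma cert_25_13_c : cert3 59 (-25) 25 280
    [35, 16, 20, 34, 15, 17, 7, 48, 10, 6, 2, 52, 7, 6, 25, 56, 34, 18, 45, 28, 41, 57, 13, 8, 5]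
    [48, 14, 2]
    [46, 27, 11, 29, 22, 26, 28, 30, 6, 3, 54, 43, 1, 56, 40, 48, 1, 51, 7, 18, 43, 27]
    [30, 39, 37]
    [(2, [4, 30]),
     (5, [29, 42, 47, 44, 13]),
     (7, [11, 50, 14, 5, 48, 12, 7]),
     (8, [2, 0, 24, 14, 13, 23, 15, 2])]
    = true := by decide +kernel

lemma cert_25_14_a : cert1 109 (-27) 25 23
    [30, 70, 13, 38, 4, 81, 73, 75, 62, 49, 77, 1, 1, 96, 25, 14, 9, 44, 96, 105, 98, 71, 76, 73, 73]
    [10, 21, 89, 71, 41, 50, 55, 0, 23, 73, 70, 67, 23, 17, 97, 83, 98, 108, 62, 6, 69, 2, 75]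
    [20, 31]
    [19, 17, 79, 94, 46, 35, 67, 7, 62, 10, 87, 28, 94, 18, 89, 70, 29, 27, 67, 14, 19, 59, 69]
    = true := by decide +kernel

lemma cert_25_14_b : cert2 31 (-27) 25 23
    [17, 25, 6, 28, 3, 25, 2, 6, 24, 25, 2, 8, 8, 25, 9, 20, 26, 10, 12, 23, 6, 1, 27, 13, 13]
    [[26, 19, 5, 27, 26, 6, 29, 13, 7, 21, 30, 2, 27, 19, 10, 10, 2, 17, 15, 17, 0, 30, 27, 22, 0],
     [23, 2, 8, 1, 0, 0, 8, 9, 14, 27, 20, 5, 28, 19, 5, 24, 6, 17, 4, 0, 26, 30, 1, 19, 24]]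
    = true := by decide +kernel

lemma cert_25_14_c : cert3 67 (-27) 25 85
    [39, 21, 23, 27, 41, 10, 46, 40, 22, 25, 50, 31, 31, 51, 53, 56, 54, 63, 2, 9, 46, 31, 15, 12, 12]
    [1, 29, 57]
    [38, 30, 26, 7, 33, 53, 48, 22, 35, 17, 58, 31, 33, 1, 31, 54, 59, 38, 5, 57, 2, 28]
    [29, 32, 9]
    [(5, [4, 21, 45, 53, 43]),
     (17, [34, 11, 2, 48, 42, 14, 40, 38, 51, 7, 28, 21, 64, 33, 16, 45, 57])]
    = true := by decide +kernel

lemma cert_32_17_a : cert1 59 (-33) 32 31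
    [48, 18, 37, 5, 5, 29, 10, 44, 10, 55, 29, 30, 40, 32, 50, 28, 9, 52, 27, 55, 30, 47, 4, 52, 28, 57, 30, 1, 36, 50, 6, 39]
    [52, 46, 30, 3, 52, 57, 18, 31, 4, 39, 50, 7, 12, 43, 55, 44, 10, 12, 38, 21, 5, 27, 14, 55, 44, 58, 34, 42, 45, 47, 54]
    [55]
    [35, 50, 5, 40, 2, 28, 54, 36, 30, 26, 17, 20, 47, 3, 21, 25, 0, 52, 53, 15, 19, 25, 58, 33, 26, 53, 10, 7, 6, 48, 35]
    = true := by decide +kernel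

lemma cert_32_17_b : cert2 37 (-33) 32 31
    [30, 20, 2, 26, 33, 8, 1, 7, 16, 10, 2, 24, 29, 12, 16, 20, 21, 34, 24, 13, 14, 3, 25, 25, 25, 24, 1, 16, 22, 15, 3, 11]
    [[16, 10, 20, 16, 9, 12, 33, 17, 34, 27, 23, 8, 22, 14, 22, 36, 2, 12, 5, 11, 4, 4, 5, 5, 25, 9, 20, 16, 0, 0, 23, 5]]
    = true := by decide +kernel

lemma cert_32_17_c : cert3 83 (-33) 32 40
    [79, 55, 7, 80, 71, 55, 67, 20, 30, 16, 63, 66, 49, 41, 35, 51, 48, 37, 14, 72, 62, 9, 22, 20, 59, 56, 40, 22, 73, 56, 78, 60]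
    [0, 51, 13]
    [79, 4, 39, 66, 37, 27, 73, 52, 37, 48, 53, 7, 56, 8, 77, 25, 12, 72, 38, 82, 31, 37, 13, 69, 41, 9, 40, 18, 72]
    [82, 32, 24]
    [(1, [40]),
     (8, [4, 17, 80, 41, 21, 30, 2, 34]),
     (20, [35, 27, 59, 50, 43, 74, 19, 31, 67, 10, 32, 60, 59, 67, 59, 56, 18, 61, 9, 23])]
    = true := by decide +kernel

lemma cert_32_18_a : cert1 103 (-35) 32 31
    [1, 45, 80, 50, 94, 100, 57, 19, 28, 95, 41, 90, 100, 49, 3, 74, 9, 89, 85, 8, 65, 62, 64, 99, 21, 91, 76, 45, 93, 74, 45, 11]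
    [67, 52, 47, 38, 58, 83, 38, 86, 17, 3, 49, 49, 59, 69, 84, 92, 14, 92, 90, 42, 74, 19, 46, 50, 17, 102, 39, 46, 44, 54, 86]
    [37]
    [82, 96, 46, 89, 84, 30, 39, 51, 84, 32, 71, 29, 19, 89, 65, 91, 48, 27, 84, 0, 80, 89, 0, 34, 75, 51, 41, 39, 59, 15, 86]
    = true := by decide +kernel

lemma cert_32_18_b : cert2 47 (-35) 32 31
    [35, 40, 11, 34, 6, 4, 16, 2, 9, 12, 19, 14, 8, 1, 27, 14, 34, 32, 29, 31, 27, 11, 37, 42, 26, 6, 15, 25, 38, 35, 23, 34]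
    [[15, 33, 27, 21, 15, 29, 43, 21, 11, 24, 24, 35, 46, 12, 14, 32, 41, 7, 24, 36, 26, 12, 30, 4, 22, 41, 40, 8, 18, 34, 44, 10]]
    = true := by decide +kernel

lemma cert_32_18_c : cert3 41 (-35) 32 364
    [26, 25, 23, 29, 9, 30, 21, 15, 13, 36, 8, 25, 19, 31, 12, 23, 36, 27, 40, 29, 30, 31, 15, 29, 32, 39, 8, 24, 30, 5, 10, 18]
    [10, 32, 18]
    [16, 30, 38, 17, 8, 26, 23, 32, 20, 34, 6, 16, 40, 26, 36, 8, 14, 5, 26, 4, 8, 10, 33, 3, 27, 15, 10, 24, 40]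
    [1, 19, 23]
    [(1, [11]),
     (4, [9, 32, 5, 15, 30, 39, 31, 20]),
     (7, [35, 32, 3, 12, 14, 26, 13]),
     (13, [2, 14, 27, 28, 5, 31, 6, 23, 34, 20, 6, 40, 4])]
    = true := by decide +kernel
end

section
set_option maxRecDepth 100000

lemma case_8_5 : Irreducible (laguerre 8 (-5)) ∧
    Nonempty ((laguerre 8 (-5)).Gal ≃* alternatingGroup (Fin 8)) :=
  main_of 7 (-5) (-9) (by norm_num)
    1450428071399129088000000
    (by decide) (by decide +kernel) (by decide +kernel) (by norm_num) 7 (by norm_num)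
    (by norm_num) 29 11 13 (by norm_num) (by norm_num) (by norm_num)
    (by decide +kernel) (by decide +kernel) (by decide +kernel)
    _ _ _ _ cert_8_5_a _ _ cert_8_5_b 5 _ _ _ _ _ cert_8_5_c

lemma case_8_6 : Irreducible (laguerre 8 (-6)) ∧
    Nonempty ((laguerre 8 (-6)).Gal ≃* alternatingGroup (Fin 8)) :=
  main_of 7 (-6) (-11) (by norm_num)
    63429799040778240000000
    (by decide) (by decide +kernel) (by decide +kernel) (by norm_num) 7 (by norm_num)
    (by norm_num) 11 17 17 (by norm_num) (by norm_num) (by norm_num)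
    (by decide +kernel) (by decide +kernel) (by decide +kernel)
    _ _ _ _ cert_8_6_a _ _ cert_8_6_b 5 _ _ _ _ _ cert_8_6_c

lemma case_9_5 : Irreducible (laguerre 9 (-5)) ∧
    Nonempty ((laguerre 9 (-5)).Gal ≃* alternatingGroup (Fin 9)) :=
  main_of 8 (-5) (-9) (by norm_num)
    2996936280964146695717781504000000
    (by decide) (by decide +kernel) (by decide +kernel) (by norm_num) 7 (by norm_num)
    (by norm_num) 11 13 19 (by norm_num) (by norm_num) (by norm_num)
    (by decide +kernel) (by decide +kernel) (by decide +kernel)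
    _ _ _ _ cert_9_5_a _ _ cert_9_5_b 5 _ _ _ _ _ cert_9_5_c

lemma case_9_6 : Irreducible (laguerre 9 (-6)) ∧
    Nonempty ((laguerre 9 (-6)).Gal ≃* alternatingGroup (Fin 9)) :=
  main_of 8 (-6) (-11) (by norm_num)
    47961943225306417169694720000000
    (by decide) (by decide +kernel) (by decide +kernel) (by norm_num) 7 (by norm_num)
    (by norm_num) 19 11 13 (by norm_num) (by norm_num) (by norm_num)
    (by decide +kernel) (by decide +kernel) (by decide +kernel)
    _ _ _ _ cert_9_6_a _ _ cert_9_6_b 5 _ _ _ _ _ cert_9_6_c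

lemma case_16_9 : Irreducible (laguerre 16 (-9)) ∧
    Nonempty ((laguerre 16 (-9)).Gal ≃* alternatingGroup (Fin 16)) :=
  main_of 15 (-9) (-17) (by norm_num)
    28194709159378473535513614964498220408756102883041068272173541611566113285477762258937131475362184691712000000000000000000000000000000
    (by decide) (by decide +kernel) (by decide +kernel) (by norm_num) 13 (by norm_num)
    (by norm_num) 19 31 17 (by norm_num) (by norm_num) (by norm_num)
    (by decide +kernel) (by decide +kernel) (by decide +kernel)
    _ _ _ _ cert_16_9_a _ _ cert_16_9_b 28 _ _ _ _ _ cert_16_9_c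

lemma case_16_10 : Irreducible (laguerre 16 (-10)) ∧
    Nonempty ((laguerre 16 (-10)).Gal ≃* alternatingGroup (Fin 16)) :=
  main_of 15 (-10) (-19) (by norm_num)
    22299578365264475661470916408464370274895691050606703676401552713621870142232683473537634454785222223331328000000000000000000000000
    (by decide) (by decide +kernel) (by decide +kernel) (by norm_num) 13 (by norm_num)
    (by norm_num) 83 29 31 (by norm_num) (by norm_num) (by norm_num)
    (by decide +kernel) (by decide +kernel) (by decide +kernel)
    _ _ _ _ cert_16_10_a _ _ cert_16_10_b 10 _ _ _ _ _ cert_16_10_c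

lemma case_24_13 : Irreducible (laguerre 24 (-13)) ∧
    Nonempty ((laguerre 24 (-13)).Gal ≃* alternatingGroup (Fin 24)) :=
  main_of 23 (-13) (-25) (by norm_num)
    46371308741664493283464361061141633726192790664669697942467348071252691843984384818817964462246350583307149598248425348859616809132134780992187926615583861691984979062020983967016810210070330630627905746263275223656881062863898948811352124487936216512865066828910074293294441275028112889021651373522944000000000000000000000000000000000000000000000000
    (by decide) (by decide +kernel) (by decide +kernel) (by norm_num) 23 (by norm_num)
    (by norm_num) 107 29 67 (by norm_num) (by norm_num) (by norm_num)
    (by decide +kernel) (by decide +kernel) (by decide +kernel)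
    _ _ _ _ cert_24_13_a _ _ cert_24_13_b 44 _ _ _ _ _ cert_24_13_c

lemma case_24_14 : Irreducible (laguerre 24 (-14)) ∧
    Nonempty ((laguerre 24 (-14)).Gal ≃* alternatingGroup (Fin 24)) :=
  main_of 23 (-14) (-27) (by norm_num)
    669150919543745255915233602788065472412066072250939436578773115958081138666897101795549759707211448182399094850273052532299051071285096494026376839786000053844795791851222627719582994719703149322645468266550834544316112000696750117518505533751962486127748026240605163982206531191823686934357606400000000000000000000000000000000000000000000000000
    (by decide) (by decide +kernel) (by decide +kernel) (by norm_num) 23 (by norm_num)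
    (by norm_num) 29 31 101 (by norm_num) (by norm_num) (by norm_num)
    (by decide +kernel) (by decide +kernel) (by decide +kernel)
    _ _ _ _ cert_24_14_a _ _ cert_24_14_b 19 _ _ _ _ _ cert_24_14_c

lemma case_25_13 : Irreducible (laguerre 25 (-13)) ∧
    Nonempty ((laguerre 25 (-13)).Gal ≃* alternatingGroup (Fin 25)) :=
  main_of 24 (-13) (-25) (by norm_num)
    3373956769185642281333592913953298828433092469980307064722535729470305657304152905913212777686301748567140719260236462931761111331589547698399686968738668779550424301270758148676891157088563386833113745252432652607740678858237439185275588860381410378094374524437449457276266277405965439467520000000000000000000000000000000000000000000000000000000000000000000000000000000000000000000000000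
    (by decide) (by decide +kernel) (by decide +kernel) (by norm_num) 23 (by norm_num)
    (by norm_num) 67 31 59 (by norm_num) (by norm_num) (by norm_num)
    (by decide +kernel) (by decide +kernel) (by decide +kernel)
    _ _ _ _ cert_25_13_a _ _ cert_25_13_b 280 _ _ _ _ _ cert_25_13_c

lemma case_25_14 : Irreducible (laguerre 25 (-14)) ∧
    Nonempty ((laguerre 25 (-14)).Gal ≃* alternatingGroup (Fin 25)) :=
  main_of 24 (-14) (-27) (by norm_num)
    17900623889333769401733544042959199684789235103776367439521126904114320383004574345041010557808804364740131152611076356081533999557750242043808062001304121625124229374081750490455349897404813566856798971491236676801152385608511290112714930714387269625725075193692315679578936766679189291074635535376797663232000000000000000000000000000000000000000000000000000000000000000000000000000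
    (by decide) (by decide +kernel) (by decide +kernel) (by norm_num) 23 (by norm_num)
    (by norm_num) 109 31 67 (by norm_num) (by norm_num) (by norm_num)
    (by decide +kernel) (by decide +kernel) (by decide +kernel)
    _ _ _ _ cert_25_14_a _ _ cert_25_14_b 85 _ _ _ _ _ cert_25_14_c

lemma case_32_17 : Irreducible (laguerre 32 (-17)) ∧
    Nonempty ((laguerre 32 (-17)).Gal ≃* alternatingGroup (Fin 32)) :=
  main_of 31 (-17) (-33) (by norm_num)
    2689615471345532592299948173119844669814340505671457448587004671904607917361230514300448501327266434576015640820308135102179605043879758171097766758910266734231616964661348743836157629670973388685836299808271488524662824891151827449044185420827353840156231290106944977202508320248795454952767696753047125394348056969965650154789448412673331992874357323598888316551060592068287131393078423380292272333679150868348047632008141340823471770173753594267550230554020181397933052335114621675353714753874557623643084811636480998660984134854220715205195255451180072960000000000000000000000000000000000000000000000000000000000000000000000000000000000000000000000000000000000000000000000000000000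
    (by decide) (by decide +kernel) (by decide +kernel) (by norm_num) 31 (by norm_num)
    (by norm_num) 59 37 83 (by norm_num) (by norm_num) (by norm_num)
    (by decide +kernel) (by decide +kernel) (by decide +kernel)
    _ _ _ _ cert_32_17_a _ _ cert_32_17_b 40 _ _ _ _ _ cert_32_17_c

lemma case_32_18 : Irreducible (laguerre 32 (-18)) ∧
    Nonempty ((laguerre 32 (-18)).Gal ≃* alternatingGroup (Fin 32)) :=
  main_of 31 (-18) (-35) (by norm_num)
    709537438180778731860467914829785656576554373012568412597082468147891764680371910551569040420735607810859825550184934473976025254641596580331505556529157709872340947112091443779075393450737824789975181132022896286522405779017379350255057908391111746381619767264244605630554181262640396650043952672669567221656155026041722954993111008663272105978482764071097223294022048963745597878487176136078946255527285159767791288378323795435548679235487382386221281775859225335972207072507166305071798368783639035319085938952234257049529978168500077324350259200000000000000000000000000000000000000000000000000000000000000000000000000000000000000000000000000000000000000000000000000000000000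
    (by decide) (by decide +kernel) (by decide +kernel) (by norm_num) 31 (by norm_num)
    (by norm_num) 103 47 41 (by norm_num) (by norm_num) (by norm_num)
    (by decide +kernel) (by decide +kernel) (by decide +kernel)
    _ _ _ _ cert_32_18_a _ _ cert_32_18_b 364 _ _ _ _ _ cert_32_18_c
end

end LaguerreAux

/-- For `(n, u)` in the exceptional set, the generalised Laguerre polynomial
`L_n^{(u+1/2)}(x)` is irreducible over `ℚ` and its Galois group is the alternating
group on `n` letters. -/
theorem laguerre_irreducible_and_gal_alternating (n : ℕ) (u : ℤ)
    (hE : ((n : ℤ), u) ∈ exceptionalSet) :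
    Irreducible (laguerre n u) ∧
      Nonempty ((laguerre n u).Gal ≃* alternatingGroup (Fin n)) := by
  simp only [exceptionalSet, Set.mem_insert_iff, Set.mem_singleton_iff, Prod.mk.injEq] at hE
  rcases hE with ⟨h, rfl⟩ | ⟨h, rfl⟩ | ⟨h, rfl⟩ | ⟨h, rfl⟩ | ⟨h, rfl⟩ | ⟨h, rfl⟩ | ⟨h, rfl⟩ |
    ⟨h, rfl⟩ | ⟨h, rfl⟩ | ⟨h, rfl⟩ | ⟨h, rfl⟩ | ⟨h, rfl⟩
  · obtain rfl : n = 8 := by omega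
    exact LaguerreAux.case_8_5
  · obtain rfl : n = 8 := by omega
    exact LaguerreAux.case_8_6
  · obtain rfl : n = 9 := by omega
    exact LaguerreAux.case_9_5
  · obtain rfl : n = 9 := by omega
    exact LaguerreAux.case_9_6
  · obtain rfl : n = 16 := by omega
    exact LaguerreAux.case_16_9
  · obtain rfl : n = 16 := by omega
    exact LaguerreAux.case_16_10
  · obtain rfl : n = 24 := by omega
    exact LaguerreAux.case_24_13
  · obtain rfl : n = 24 := by omega
    exact LaguerreAux.case_24_14
  · obtain rfl : n = 25 := by omega
    exact LaguerreAux.case_25_13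
  · obtain rfl : n = 25 := by omega
    exact LaguerreAux.case_25_14
  · obtain rfl : n = 32 := by omega
    exact LaguerreAux.case_32_17
  · obtain rfl : n = 32 := by omega
    exact LaguerreAux.case_32_18
end

section
/- Let f(x) = ∑_{j=0}^m C(m,j) c_j x^j ∈ ℚ[x] be an irreducible polynomial of degree m, where C(m,j) is the binomial coefficient. Suppose there is a prime p with m/2 < p < m - 2 such that: (i) ν_p(c_j) ≥ 0 for j = 0, 1, …, m; (ii) ν_p(c_0) = 1; (iii) ν_p(c_j) ≥ 1 for 0 ≤ j ≤ m - p; and (iv) ν_p(c_p) = 0. Then the Galois group of f over ℚ contains the alternating group A_m (i.e., the image of the Galois group acting on the m roots of f contains all even permutations of the roots). Moreover, the Galois group is isomorphic to A_m if the discriminant of f is a square of a nonzero rational number, and is isomorphic to S_m otherwise. -/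
open Polynomial Finset

/-- The discriminant of a polynomial `f ∈ ℚ[x]`, computed in its splitting field as
`lc(f)^(2m-2) ∏_{i<j} (rᵢ - rⱼ)²` over the roots `r₀, …, r_{m-1}` of `f` (with
multiplicity), where `m = deg f`. -/
noncomputable def polyDisc (f : Polynomial ℚ) : f.SplittingField :=
  (algebraMap ℚ f.SplittingField f.leadingCoeff) ^ (2 * f.natDegree - 2) *
    ∏ i ∈ Finset.range f.natDegree, ∏ j ∈ Finset.range f.natDegree,
      if i < j then
        (((f.map (algebraMap ℚ f.SplittingField)).roots.toList.getD i 0) -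
            ((f.map (algebraMap ℚ f.SplittingField)).roots.toList.getD j 0)) ^ 2
      else 1



open Equiv Equiv.Perm MulAction in
theorem jordan_aux_normalizer {α : Type*} [Fintype α] [DecidableEq α] (G : Subgroup (Perm α))
    {p : ℕ} (hp : p.Prime) {g : Perm α} (hgc : g.IsCycle) (hgp : g.support.card = p) (hg : g ∈ G)
    (n : Perm α) (hn : n ∈ G) (hnF : ∀ z, z ∉ g.support → n z ∉ g.support) :
    ∃ u ∈ G, (∀ z, z ∉ g.support → u z = z) ∧ (u * n) * g * (u * n)⁻¹ ∈ Subgroup.zpowers g := by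
  classical
  have : Fact p.Prime := ⟨hp⟩
  let K : Subgroup (Perm α) :=
    { carrier := {h | ∀ z, z ∉ g.support → h z = z}
      mul_mem' := by
        intro a b ha hb z hz
        rw [Perm.mul_apply, hb z hz, ha z hz]
      one_mem' := by intro z hz; rfl
      inv_mem' := by
        intro a ha z hz
        rw [Perm.inv_eq_iff_eq, ha z hz] }
  have hKcard : Nat.card K = p.factorial := by
    have e : Perm {x // x ∈ g.support} ≃ K :=
      (Equiv.Perm.subtypeEquivSubtypePerm (fun x => x ∈ g.support))
    rw [← Nat.card_congr e, Nat.card_perm]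
    rw [Nat.card_eq_fintype_card, Fintype.card_coe, hgp]
  let H : Subgroup (Perm α) := G ⊓ K
  have hHdvd : Nat.card H ∣ p.factorial := by
    rw [← hKcard]; exact Subgroup.card_dvd_of_le inf_le_right
  have hgK : g ∈ K := by
    intro z hz; simpa using hz
  have hgH : g ∈ H := ⟨hg, hgK⟩
  have hinv : ∀ z, z ∉ g.support → n⁻¹ z ∉ g.support := by
    have hfin : Set.MapsTo n {z | z ∉ g.support} {z | z ∉ g.support} := hnF
    have hinj : Set.InjOn n {z | z ∉ g.support} := n.injective.injOn
    have hs : Set.SurjOn n {z | z ∉ g.support} {z | z ∉ g.support} :=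
      ((Set.toFinite _).injOn_iff_bijOn_of_mapsTo hfin).1 hinj |>.surjOn
    intro z hz
    obtain ⟨w, hw, rfl⟩ := hs hz
    simpa using hw
  have hg'H : n * g * n⁻¹ ∈ H := by
    refine ⟨G.mul_mem (G.mul_mem hn hg) (G.inv_mem hn), ?_⟩
    intro z hz
    rw [Perm.mul_apply, Perm.mul_apply, hgK _ (hinv z hz)]
    simp
  have hord : orderOf g = p := by rw [hgc.orderOf, hgp]
  let x : H := ⟨g, hgH⟩
  let y : H := ⟨n * g * n⁻¹, hg'H⟩
  have hx : orderOf x = p := by rw [Subgroup.orderOf_mk, hord]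
  have hy : orderOf y = p := by
    rw [Subgroup.orderOf_mk, ← hord]
    have := orderOf_injective (MulAut.conj n).toMonoidHom (MulAut.conj n).injective g
    simpa using this
  have hfac : (Nat.card H).factorization p = 1 := by
    apply le_antisymm
    · have h1 : (Nat.card H).factorization p ≤ (p.factorial).factorization p :=
        (Nat.factorization_le_iff_dvd Nat.card_pos.ne' (Nat.factorial_ne_zero p)).2 hHdvd p
      have h2 : (p.factorial).factorization p = 1 := by
        obtain ⟨q, rfl⟩ : ∃ q, p = q + 1 := ⟨p - 1, by have := hp.pos; omega⟩
        rw [Nat.factorial_succ, Nat.factorization_mul (by omega) (Nat.factorial_ne_zero _),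
          Finsupp.add_apply, hp.factorization_self,
          Nat.factorization_eq_zero_of_not_dvd]
        intro h
        have := (hp.dvd_factorial).1 h
        omega
      omega
    · rw [← hp.dvd_iff_one_le_factorization Nat.card_pos.ne', ← hx]
      exact orderOf_dvd_natCard x
  let P : Sylow p H := Sylow.ofCard (Subgroup.zpowers x) (by
    rw [hfac, Nat.card_zpowers, hx, pow_one])
  let Q : Sylow p H := Sylow.ofCard (Subgroup.zpowers y) (by
    rw [hfac, Nat.card_zpowers, hy, pow_one])
  obtain ⟨u, hu⟩ := MulAction.exists_smul_eq H Q P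
  refine ⟨u, u.2.1, u.2.2, ?_⟩
  have h1 : u * y * u⁻¹ ∈ (P : Subgroup H) := by
    rw [← hu]
    have : y ∈ (Q : Subgroup H) := Subgroup.mem_zpowers y
    rw [Sylow.coe_subgroup_smul]
    exact Subgroup.smul_mem_pointwise_smul y (MulAut.conj u) _ this
  have h2 : u * y * u⁻¹ ∈ Subgroup.zpowers x := h1
  obtain ⟨k, hk⟩ := h2
  refine ⟨k, ?_⟩
  have := congrArg (Subtype.val) hk
  simpa [x, y, mul_assoc] using this

open Equiv Equiv.Perm MulAction in
theorem jordan_prime_cycle {α : Type*} [Fintype α] [DecidableEq α] (G : Subgroup (Perm α))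
    (hG : IsPreprimitive G α)
    {p : ℕ} (hp : p.Prime) (hp' : p + 3 ≤ Nat.card α)
    {g : Perm α} (hgc : g.IsCycle) (hgp : g.support.card = p)
    (hg : g ∈ G) : alternatingGroup α ≤ G := by
  classical
  obtain ⟨k, hk⟩ := Nat.exists_eq_add_of_le' hp'
  have hsc : Set.ncard ((g.support)ᶜ : Set α) = (k + 2) + 1 := by
    apply Nat.add_left_cancel
    rw [Set.ncard_add_ncard_compl, Set.ncard_coe_finset, hgp]
    omega
  have hmp : IsMultiplyPreprimitive G α (k + 2 + 2) := by
    apply hG.isMultiplyPreprimitive hsc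
    · have := hp.two_le
      omega
    have := isPretransitive_of_isCycle_mem hgc hg
    apply IsPreprimitive.of_prime_card
    convert! hp
    rw [Nat.card_eq_fintype_card, Fintype.card_subtype, ← hgp]
    apply congr_arg
    ext x
    simp [SubMulAction.mem_ofFixingSubgroup_iff]
  have hmt' : IsMultiplyPretransitive G α (k + 2 + 2) := hmp.isMultiplyPretransitive
  have hmt : IsMultiplyPretransitive G α (k + 2 + 1) :=
    isMultiplyPretransitive_of_le (n := k + 2 + 2) (by omega) (by
      have := hp.two_le
      omega)
  have key : ∀ τ : Perm α, (∀ z, z ∉ g.support → τ z ∉ g.support) → ∃ n ∈ G,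
      (∀ z, z ∉ g.support → n z = τ z) ∧ n * g * n⁻¹ ∈ Subgroup.zpowers g := by
    intro τ hτ
    have e : Fin (k + 2 + 1) ≃ ((g.support)ᶜ : Set α) := by
      apply Fintype.equivOfCardEq
      rw [Fintype.card_fin, ← hsc, ← Nat.card_coe_set_eq, Nat.card_eq_fintype_card]
    let x : Fin (k + 2 + 1) ↪ α := e.toEmbedding.trans (Function.Embedding.subtype _)
    let y : Fin (k + 2 + 1) ↪ α := x.trans τ.toEmbedding
    obtain ⟨n, hn⟩ := MulAction.exists_smul_eq G x y
    have hnz : ∀ z, z ∉ g.support → (n : Perm α) z = τ z := by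
      intro z hz
      have := DFunLike.congr_fun hn (e.symm ⟨z, hz⟩)
      simp only [x, y] at this
      simpa [Subgroup.smul_def] using this
    obtain ⟨u, huG, hu, hun⟩ := jordan_aux_normalizer G hp hgc hgp hg n n.2
      (fun z hz => by rw [hnz z hz]; exact hτ z hz)
    refine ⟨u * n, G.mul_mem huG n.2, fun z hz => ?_, hun⟩
    rw [Perm.mul_apply, hnz z hz, hu _ (hτ z hz)]
  have h3 : 2 < (g.supportᶜ).card := by
    rw [Finset.card_compl, hgp, ← Nat.card_eq_fintype_card]; omega
  obtain ⟨a, b, c, ha, hb, hc, hab, hac, hbc⟩ := Finset.two_lt_card_iff.1 h3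
  rw [Finset.mem_compl] at ha hb hc
  have hsw : ∀ a b : α, a ∉ g.support → b ∉ g.support → ∀ z, z ∉ g.support →
      swap a b z ∉ g.support := by
    intro a b ha hb z hz
    rw [swap_apply_def]
    split_ifs <;> assumption
  obtain ⟨n₁, hn₁, hz₁, hc₁⟩ := key (swap a b) (hsw a b ha hb)
  obtain ⟨n₂, hn₂, hz₂, hc₂⟩ := key (swap a c) (hsw a c ha hc)
  have hi₁ : ∀ z, z ∉ g.support → n₁⁻¹ z = swap a b z := by
    intro z hz
    rw [Perm.inv_eq_iff_eq, hz₁ _ (hsw a b ha hb z hz), swap_apply_self]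
  have hi₂ : ∀ z, z ∉ g.support → n₂⁻¹ z = swap a c z := by
    intro z hz
    rw [Perm.inv_eq_iff_eq, hz₂ _ (hsw a c ha hc z hz), swap_apply_self]
  obtain ⟨i₁, hi1⟩ := hc₁
  obtain ⟨i₂, hi2⟩ := hc₂
  simp only at hi1 hi2
  have e1 : (n₁ * n₂) * g * (n₁ * n₂)⁻¹ = g ^ (i₁ * i₂) := by
    rw [zpow_mul, hi1, conj_zpow, hi2]; group
  have e2 : (n₂ * n₁) * g * (n₂ * n₁)⁻¹ = g ^ (i₁ * i₂) := by
    rw [mul_comm i₁, zpow_mul, hi2, conj_zpow, hi1]; group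
  set h : Perm α := (n₂ * n₁)⁻¹ * (n₁ * n₂) with hh
  have hcomm : Commute h g := by
    have : (n₁ * n₂) * g * (n₁ * n₂)⁻¹ = (n₂ * n₁) * g * (n₂ * n₁)⁻¹ := e1.trans e2.symm
    rw [mul_inv_eq_iff_eq_mul] at this
    rw [commute_iff_eq, hh, mul_assoc, this]
    group
  have hhG : h ∈ G := G.mul_mem (G.inv_mem (G.mul_mem hn₂ hn₁)) (G.mul_mem hn₁ hn₂)
  set t : Perm α := (swap a b * swap a c) * (swap a b * swap a c) with ht
  have ht3 : t.IsThreeCycle :=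
    (isThreeCycle_swap_mul_swap_same hab hac hbc).isThreeCycle_sq
  have hht : ∀ z, z ∉ g.support → h z = t z := by
    intro z hz
    have s1 := hsw a c ha hc z hz
    have s2 := hsw a b ha hb _ s1
    have s3 := hsw a c ha hc _ s2
    simp only [hh, ht, mul_inv_rev, Perm.mul_apply]
    rw [hz₂ z hz, hz₁ _ s1, hi₂ _ s2, hi₁ _ s3]
  have htF : ∀ z, z ∉ g.support → t z ∉ g.support := by
    intro z hz
    have s1 := hsw a c ha hc z hz
    have s2 := hsw a b ha hb _ s1
    have s3 := hsw a c ha hc _ s2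
    exact hsw a b ha hb _ s3
  obtain ⟨hc', i, hi⟩ := hgc.commute_iff.1 hcomm
  simp only at hi
  have hfix : ∀ (j : ℤ) z, z ∉ g.support → (g ^ j) z = z := by
    intro j z hz
    have : z ∉ (g ^ j).support := fun h => hz (support_zpow_le g j h)
    simpa using this
  have hfin : g ^ (-i) * h = t := by
    ext z
    rw [Perm.mul_apply]
    by_cases hz : z ∈ g.support
    · have h1 : (g ^ i) z = h z := by
        rw [hi, ofSubtype_apply_of_mem _ hz]; rfl
      rw [← h1, ← Perm.mul_apply, ← zpow_add]
      have hza : z ≠ a := fun h => ha (h ▸ hz)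
      have hzb : z ≠ b := fun h => hb (h ▸ hz)
      have hzc : z ≠ c := fun h => hc (h ▸ hz)
      simp [ht, swap_apply_of_ne_of_ne, hza, hzb, hzc]
    · rw [hht z hz, hfix _ _ (htF z hz)]
  apply alternatingGroup_le_of_isPreprimitive_of_isThreeCycle_mem hG ht3
  rw [← hfin]
  exact G.mul_mem (G.zpow_mem hg _) hhG

open Equiv Equiv.Perm MulAction in
theorem transitive_prime_cycle {α : Type*} [Fintype α] [DecidableEq α] (G : Subgroup (Perm α))
    (hG : IsPretransitive G α)
    {p : ℕ} (hp : p.Prime) (hp' : p + 3 ≤ Nat.card α) (hp2 : Nat.card α < 2 * p)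
    (hdvd : p ∣ Nat.card G) : alternatingGroup α ≤ G := by
  classical
  have : Fact p.Prime := ⟨hp⟩
  obtain ⟨g, hg⟩ := exists_prime_orderOf_dvd_card' p hdvd
  have hg' : orderOf (g : Perm α) = p := by rw [Subgroup.orderOf_coe, hg]
  have hgc : (g : Perm α).IsCycle := isCycle_of_prime_order' (by rw [hg']; exact hp)
    (by rw [hg', ← Nat.card_eq_fintype_card]; exact hp2)
  have hgs : (g : Perm α).support.card = p := by rw [← hgc.orderOf, hg']
  refine jordan_prime_cycle G ?_ hp hp' hgc hgs g.2
  have := isPretransitive_of_isCycle_mem hgc g.2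
  have hpr : IsPreprimitive (fixingSubgroup G ((((g : Perm α).support : Set α))ᶜ))
      (SubMulAction.ofFixingSubgroup G ((((g : Perm α).support : Set α))ᶜ)) := by
    apply IsPreprimitive.of_prime_card
    convert! hp
    rw [Nat.card_eq_fintype_card, Fintype.card_subtype, ← hgs]
    apply congr_arg
    ext x
    simp [SubMulAction.mem_ofFixingSubgroup_iff]
  let f : (SubMulAction.ofFixingSubgroup G ((((g : Perm α).support : Set α))ᶜ)) →ₑ[
      ((fixingSubgroup G ((((g : Perm α).support : Set α))ᶜ)).subtype)] α :=
    { toFun := Subtype.val, map_smul' := fun _ _ => rfl }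
  refine IsPreprimitive.of_card_lt (f := f) ?_
  have hr : Set.range f = ((g : Perm α).support : Set α) := by
    have : Set.range f = Set.range (Subtype.val : SubMulAction.ofFixingSubgroup G
      ((((g : Perm α).support : Set α))ᶜ) → α) := rfl
    rw [this]
    ext x
    simp [SubMulAction.mem_ofFixingSubgroup_iff]
  rw [hr, Set.ncard_coe_finset, hgs]
  exact hp2

theorem splittingField_normal (f : ℚ[X]) : Normal ℚ f.SplittingField :=
  @Normal.of_isSplittingField ℚ _ f.SplittingField _ _ f
    (Polynomial.IsSplittingField.splittingField f)

open IsDedekindDomain NumberField WithZero in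
theorem exists_val_above (L : Type*) [Field L] [NumberField L] [IsGalois ℚ L] (p : ℕ)
    (hp : p.Prime) : ∃ (w : Valuation L ℤᵐ⁰) (e : ℕ), e ∣ Nat.card (L ≃ₐ[ℚ] L) ∧ e ≠ 0 ∧
      w (p : L) = exp (-(e : ℤ)) ∧ (∀ n : ℤ, ¬ (p : ℤ) ∣ n → w (n : L) = 1) := by
  have hpZ : Prime (p : ℤ) := Nat.prime_iff_prime_int.mp hp
  have hprime : (Ideal.span {(p : ℤ)}).IsPrime := (Ideal.span_singleton_prime hpZ.ne_zero).2 hpZ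
  have hne : Ideal.span {(p : ℤ)} ≠ ⊥ := by simpa using hp.ne_zero
  let v : HeightOneSpectrum ℤ := ⟨Ideal.span {(p : ℤ)}, hprime, hne⟩
  have : v.asIdeal.IsPrime := hprime
  have : v.asIdeal.IsMaximal := hprime.isMaximal hne
  obtain ⟨P, hPm, hPo⟩ := Ideal.exists_maximal_ideal_liesOver_of_isIntegral (S := 𝓞 L) v.asIdeal
  have hPp : P.IsPrime := hPm.isPrime
  have hPb : P ≠ ⊥ := Ideal.ne_bot_of_liesOver_of_ne_bot hne P
  let u : HeightOneSpectrum (𝓞 L) := ⟨P, hPp, hPb⟩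
  have : u.asIdeal.LiesOver v.asIdeal := hPo
  have hv := HeightOneSpectrum.intValuation_liesOver v u
  refine ⟨u.valuation L, v.asIdeal.ramificationIdx' u.asIdeal, ?_, ?_, ?_, ?_⟩
  · have h := Ideal.ncard_primesOver_mul_ramificationIdxIn_mul_inertiaDegIn v.asIdeal (𝓞 L)
      (L ≃ₐ[ℚ] L)
    rw [← h]
    rw [Ideal.ramificationIdxIn_eq_ramificationIdx v.asIdeal P (L ≃ₐ[ℚ] L)]
    rw [Ideal.ramificationIdx'_eq_ramificationIdx _ _ hne]
    exact dvd_mul_of_dvd_right (dvd_mul_right _ _) _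
  · exact Ideal.IsDedekindDomain.ramificationIdx'_ne_zero_of_liesOver u.asIdeal v.ne_bot
  · have h := hv (p : ℤ)
    have h1 : v.intValuation (p : ℤ) = exp (-1 : ℤ) :=
      HeightOneSpectrum.intValuation_singleton v hpZ.ne_zero rfl
    rw [h1] at h
    have h2 : (p : L) = algebraMap (𝓞 L) L (algebraMap ℤ (𝓞 L) p) := by simp
    rw [h2, HeightOneSpectrum.valuation_of_algebraMap, ← h, ← exp_nsmul]
    simp
  · intro n hn
    have h := hv n
    have h1 : v.intValuation n = 1 := by
      rw [HeightOneSpectrum.intValuation_eq_one_iff]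
      intro h
      exact hn (Ideal.mem_span_singleton.1 h)
    rw [h1] at h
    have h2 : (n : L) = algebraMap (𝓞 L) L (algebraMap ℤ (𝓞 L) n) := by simp
    rw [h2, HeightOneSpectrum.valuation_of_algebraMap, ← h, one_pow]

open WithZero in
theorem val_int_eq {L : Type*} [Field L] (w : Valuation L ℤᵐ⁰) {p : ℕ} (hp : p.Prime)
    (h1 : ∀ n : ℤ, ¬ (p : ℤ) ∣ n → w (n : L) = 1) (n : ℤ) (hn : n ≠ 0) :
    w (n : L) = w (p : L) ^ (padicValRat p (n : ℚ)) := by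
  have : Fact p.Prime := ⟨hp⟩
  have hpZ : Prime (p : ℤ) := Nat.prime_iff_prime_int.mp hp
  obtain ⟨k, q, hq, rfl⟩ := (FiniteMultiplicity.of_prime_left hpZ hn).exists_eq_pow_mul_and_not_dvd |> fun ⟨q, h, h'⟩ => (⟨_, q, h', h⟩ : ∃ k q, ¬ (p:ℤ) ∣ q ∧ n = (p:ℤ)^k * q)
  have hq0 : q ≠ 0 := by rintro rfl; simp at hq
  have h3 : padicValRat p (q : ℚ) = 0 := by
    rw [padicValRat.of_int, padicValInt.eq_zero_of_not_dvd hq]; rfl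
  push_cast
  rw [map_mul, map_pow, h1 q hq, padicValRat.mul (by simp [hp.ne_zero]) (by exact_mod_cast hq0), h3,
    padicValRat.pow, padicValRat.self hp.one_lt]
  simp

open WithZero in
theorem val_rat_eq {L : Type*} [Field L] [CharZero L] (w : Valuation L ℤᵐ⁰) {p : ℕ}
    (hp : p.Prime) (hp0 : w (p : L) ≠ 0)
    (h1 : ∀ n : ℤ, ¬ (p : ℤ) ∣ n → w (n : L) = 1) (x : ℚ) (hx : x ≠ 0) :
    w (x : L) = w (p : L) ^ (padicValRat p x) := by
  have : Fact p.Prime := ⟨hp⟩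
  have hn : x.num ≠ 0 := by simpa using hx
  have hd : (x.den : ℤ) ≠ 0 := by exact_mod_cast x.den_ne_zero
  have e1 := val_int_eq w hp h1 x.num hn
  have e2 := val_int_eq w hp h1 x.den hd
  have e3 : (x : L) = ((x.num : ℤ) : L) / ((x.den : ℤ) : L) := by
    rw [Rat.cast_def]; simp
  have e4 : padicValRat p x = padicValRat p (x.num : ℚ) - padicValRat p ((x.den : ℤ) : ℚ) := by
    rw [← padicValRat.div (by exact_mod_cast hn) (by exact_mod_cast hd)]
    congr 1
    simpa using (Rat.num_div_den x).symm
  rw [e3, map_div₀, e1, e2, e4, zpow_sub₀ hp0]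

open WithZero in
theorem coeff_le_of_roots {L : Type*} [Field L] (w : Valuation L ℤᵐ⁰) (c : L) (s : Multiset L)
    (hs : ∀ a ∈ s, 1 ≤ w a) (j : ℕ) :
    w ((C c * (s.map (fun a => X - C a)).prod).coeff j) ≤
      w ((C c * (s.map (fun a => X - C a)).prod).coeff 0) := by
  induction s using Multiset.induction_on generalizing j with
  | empty =>
    simp only [Multiset.map_zero, Multiset.prod_zero, mul_one, coeff_C_zero]
    rw [coeff_C]
    split_ifs <;> simp
  | cons a s ih =>
    have ih' := ih (fun b hb => hs b (Multiset.mem_cons_of_mem hb))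
    have ha := hs a (Multiset.mem_cons_self a s)
    rw [Multiset.map_cons, Multiset.prod_cons, mul_left_comm]
    set P := C c * (s.map (fun a => X - C a)).prod
    have h0 : w (((X - C a) * P).coeff 0) = w a * w (P.coeff 0) := by
      simp [mul_coeff_zero]
    rw [h0]
    cases j with
    | zero => rw [h0]
    | succ j =>
      rw [sub_mul, coeff_sub, coeff_X_mul, coeff_C_mul (p := P)]
      refine (w.map_sub _ _).trans (max_le ?_ ?_)
      · exact (ih' j).trans (le_mul_of_one_le_left' ha)
      · rw [map_mul]
        exact mul_le_mul_right (ih' _) _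

open WithZero in
theorem exists_root_val {L : Type*} [Field L] (w : Valuation L ℤᵐ⁰) (F : L[X]) (hF : F.Splits)
    (p : ℕ) (hlt : w (F.coeff 0) < 1) (h0 : w (F.coeff 0) ≠ 0)
    (hle : ∀ j, w (F.coeff j) ≤ 1) (hlep : ∀ j < p, w (F.coeff j) ≤ w (F.coeff 0))
    (hpp : w (F.coeff p) = 1) : ∃ a : L, w a ^ p = w (F.coeff 0) := by
  have hex : ∃ a ∈ F.roots, w a < 1 := by
    by_contra! hcon
    have := coeff_le_of_roots w F.leadingCoeff F.roots hcon p
    rw [← hF.eq_prod_roots, hpp] at this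
    exact absurd hlt (not_lt.2 this)
  obtain ⟨a, haF, ha⟩ := hex
  refine ⟨a, ?_⟩
  have hF0 : F ≠ 0 := by rintro rfl; simp at h0
  have hroot : F.eval a = 0 := (mem_roots hF0).1 haF
  have ha0 : w a ≠ 0 := by
    intro h
    have : a = 0 := by simpa using h
    subst this
    rw [← coeff_zero_eq_eval_zero] at hroot
    simp [hroot] at h0
  have hpd : p ≤ F.natDegree := le_natDegree_of_ne_zero (by
    intro h; rw [h] at hpp; simp at hpp)
  rw [eval_eq_sum_range] at hroot
  have hapos : 0 < w a := zero_lt_iff.2 ha0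
  have hgen : ∀ i ∈ range (F.natDegree + 1), w (F.coeff i * a ^ i) ≠ 0 →
      ¬ (∀ j ∈ range (F.natDegree + 1), j ≠ i → w (F.coeff j * a ^ j) < w (F.coeff i * a ^ i)) := by
    intro i hi hi0 hall
    rw [← Finset.add_sum_erase _ _ hi] at hroot
    have h1 : w (∑ j ∈ (range (F.natDegree + 1)).erase i, F.coeff j * a ^ j) <
        w (F.coeff i * a ^ i) := by
      apply w.map_sum_lt hi0
      intro j hj
      exact hall j (Finset.mem_of_mem_erase hj) (Finset.ne_of_mem_erase hj)
    have h2 := w.map_add_eq_of_lt_right h1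
    rw [add_comm, hroot, map_zero] at h2
    exact hi0 h2.symm
  have hsmall : ∀ j, 0 < j → j < p → w (F.coeff j * a ^ j) < w (F.coeff 0) := by
    intro j hj hjp
    rw [map_mul, map_pow]
    calc w (F.coeff j) * w a ^ j ≤ w (F.coeff 0) * w a ^ j := by gcongr; exact hlep j hjp
      _ < w (F.coeff 0) * 1 := by
        apply mul_lt_mul_of_pos_left _ (zero_lt_iff.2 h0)
        exact pow_lt_one₀ hapos.le ha hj.ne'
      _ = _ := mul_one _
  have hbig : ∀ j, p < j → w (F.coeff j * a ^ j) < w a ^ p := by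
    intro j hj
    rw [map_mul, map_pow]
    calc w (F.coeff j) * w a ^ j ≤ 1 * w a ^ j := by gcongr; exact hle j
      _ = w a ^ j := one_mul _
      _ < w a ^ p := pow_lt_pow_right_of_lt_one₀ hapos ha hj
  have ep : w (F.coeff p * a ^ p) = w a ^ p := by rw [map_mul, map_pow, hpp, one_mul]
  have e0 : w (F.coeff 0 * a ^ 0) = w (F.coeff 0) := by simp
  rcases lt_trichotomy (w a ^ p) (w (F.coeff 0)) with h | h | h
  · exfalso
    apply hgen 0 (by simp) (by rwa [e0])
    intro j _ hj
    rw [e0]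
    rcases lt_trichotomy j p with h' | h' | h'
    · exact hsmall j (Nat.pos_of_ne_zero hj) h'
    · rw [h', ep]; exact h
    · exact (hbig j h').trans h
  · exact h
  · exfalso
    apply hgen p (by simp; omega) (by rw [ep]; exact pow_ne_zero _ ha0)
    intro j _ hj
    rw [ep]
    rcases lt_trichotomy j p with h' | h' | h'
    · rcases Nat.eq_zero_or_pos j with h'' | h''
      · rw [h'', e0]; exact h
      · exact (hsmall j h'' h').trans h
    · exact absurd h' hj
    · exact hbig j h'

open WithZero in
theorem prime_dvd_card_gal (m : ℕ) (c : ℕ → ℚ) (f : Polynomial ℚ)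
    (hf : f = ∑ j ∈ Finset.range (m + 1),
      Polynomial.C ((m.choose j : ℚ) * c j) * Polynomial.X ^ j)
    (p : ℕ) (hp : p.Prime) (hp1 : m < 2 * p) (hp2 : p + 2 < m)
    (h1 : ∀ j ≤ m, c j = 0 ∨ 0 ≤ padicValRat p (c j))
    (h2 : c 0 ≠ 0 ∧ padicValRat p (c 0) = 1)
    (h3 : ∀ j ≤ m - p, c j = 0 ∨ 1 ≤ padicValRat p (c j))
    (h4 : c p ≠ 0 ∧ padicValRat p (c p) = 0) : p ∣ Nat.card f.Gal := by
  have : IsGalois ℚ f.SplittingField :=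
    have := splittingField_normal f
    IsGalois.mk
  have : NumberField f.SplittingField := NumberField.of_module_finite ℚ f.SplittingField
  obtain ⟨w, e, he, he0, hwp, hw1⟩ := exists_val_above f.SplittingField p hp
  refine dvd_trans ?_ he
  have hwp0 : w (p : f.SplittingField) ≠ 0 := by rw [hwp]; exact exp_ne_zero
  have hwplt : w (p : f.SplittingField) < 1 := by
    rw [hwp, ← exp_zero, exp_lt_exp]; omega
  have hrat := val_rat_eq w hp hwp0 hw1
  have hnat : ∀ n : ℕ, w (n : f.SplittingField) ≤ 1 := by
    intro n
    by_cases hn : n = 0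
    · simp [hn]
    · have := hrat (n : ℚ) (by exact_mod_cast hn)
      rw [Rat.cast_natCast, padicValRat.of_nat, zpow_natCast] at this
      rw [this]
      exact pow_le_one₀ zero_le hwplt.le
  have hcoef : ∀ j, (f.map (algebraMap ℚ f.SplittingField)).coeff j =
      if j ≤ m then (m.choose j : f.SplittingField) * ((c j : ℚ) : f.SplittingField) else 0 := by
    intro j
    have hfj : f.coeff j = (∑ j ∈ Finset.range (m + 1),
      Polynomial.C ((m.choose j : ℚ) * c j) * Polynomial.X ^ j).coeff j := congrArg (coeff · j) hf
    rw [coeff_map, hfj]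
    simp only [finsetSum_coeff, coeff_C_mul, coeff_X_pow]
    simp only [mul_ite, mul_one, mul_zero, Finset.sum_ite_eq, Finset.mem_range, Nat.lt_succ_iff]
    split_ifs <;> simp
  have hc1 : ∀ j ≤ m, w ((c j : ℚ) : f.SplittingField) ≤ 1 := by
    intro j hj
    by_cases h : c j = 0
    · simp [h]
    rw [hrat _ h]
    obtain ⟨k, hk⟩ := Int.eq_ofNat_of_zero_le ((h1 j hj).resolve_left h)
    rw [hk, zpow_natCast]
    exact pow_le_one₀ zero_le hwplt.le
  have hc2 : ∀ j ≤ m - p, w ((c j : ℚ) : f.SplittingField) ≤ w (p : f.SplittingField) := by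
    intro j hj
    by_cases h : c j = 0
    · simp [h]
    rw [hrat _ h]
    have := (h3 j hj).resolve_left h
    obtain ⟨k, hk⟩ := Int.le.dest this
    rw [← hk, zpow_add₀ hwp0, zpow_one, zpow_natCast]
    exact mul_le_of_le_one_right' (pow_le_one₀ zero_le hwplt.le)
  have a0 : w ((f.map (algebraMap ℚ f.SplittingField)).coeff 0) = w (p : f.SplittingField) := by
    rw [hcoef, if_pos (Nat.zero_le _), map_mul, hrat _ h2.1, h2.2]
    simp
  obtain ⟨a, ha⟩ := exists_root_val w (f.map (algebraMap ℚ f.SplittingField))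
    (SplittingField.splits f) p (by rw [a0]; exact hwplt) (by rw [a0]; exact hwp0)
    (by
      intro j
      rw [hcoef]
      split_ifs with hj
      · rw [map_mul]
        exact mul_le_one' (hnat _) (hc1 j hj)
      · simp)
    (by
      intro j hj
      rw [a0, hcoef, if_pos (by omega), map_mul]
      by_cases hjm : j ≤ m - p
      · exact (mul_le_of_le_one_left' (hnat _)).trans (hc2 j hjm)
      · obtain ⟨d, hd⟩ := hp.dvd_choose (a := j) (b := m) hj (by omega) (by omega)
        rw [hd, Nat.cast_mul, map_mul, mul_assoc]
        exact mul_le_of_le_one_right' (mul_le_one' (hnat _) (hc1 j (by omega))))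
    (by
      rw [hcoef, if_pos (by omega), map_mul, hrat _ h4.1, h4.2, zpow_zero, mul_one]
      have := hw1 (m.choose p) (by
        have : Fact p.Prime := ⟨hp⟩
        intro hdvd
        have hl := Choose.choose_modEq_choose_mod_mul_choose_div_nat (n := m) (k := p) (p := p)
        have e1 : m / p = 1 := by
          apply Nat.div_eq_of_lt_le <;> omega
        rw [Nat.mod_self, Nat.div_self hp.pos, e1] at hl
        simp only [Nat.choose_zero_right, Nat.choose_self, mul_one] at hl
        have h0 : m.choose p ≡ 0 [MOD p] := (Nat.modEq_zero_iff_dvd).2 (by exact_mod_cast hdvd)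
        have := (Nat.modEq_zero_iff_dvd).1 (hl.symm.trans h0)
        exact hp.one_lt.ne' (Nat.dvd_one.1 this))
      exact_mod_cast this)
  rw [a0, hwp] at ha
  have := congrArg log ha
  rw [log_pow, log_exp, nsmul_eq_mul] at this
  have hd : (p : ℤ) ∣ -(e : ℤ) := ⟨_, this.symm⟩
  rw [dvd_neg] at hd
  exact_mod_cast hd

/-- If the `r i` enumerate the roots, the square root of the discriminant. -/
theorem exists_sqrt_disc (f : ℚ[X]) (hirr : Irreducible f) {m : ℕ} (hdeg : f.natDegree = m) :
    ∃ (r : Fin m ≃ f.rootSet f.SplittingField) ,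
      polyDisc f = ((algebraMap ℚ f.SplittingField f.leadingCoeff) ^ (m - 1) *
        (Matrix.vandermonde (fun i => (r i : f.SplittingField))).det) ^ 2 := by
  subst hdeg
  set L := f.SplittingField
  set s := (f.map (algebraMap ℚ L)).roots with hs
  have hsplit : (f.map (algebraMap ℚ L)).Splits := SplittingField.splits f
  have hlen : s.toList.length = f.natDegree := by
    rw [Multiset.length_toList, hs, ← hsplit.natDegree_eq_card_roots, natDegree_map]
  have hnodup : s.toList.Nodup := by
    rw [← Multiset.coe_nodup, Multiset.coe_toList]
    exact nodup_roots (hirr.separable.map)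
  have hf0 : f ≠ 0 := hirr.ne_zero
  have hmem : ∀ x, x ∈ s.toList ↔ x ∈ f.rootSet L := by
    intro x
    rw [Multiset.mem_toList, hs, mem_rootSet, mem_roots (map_ne_zero hf0)]
    simp [hf0, aeval_def, eval_map]
  let r0 : Fin f.natDegree → f.rootSet L := fun i =>
    ⟨s.toList.get (i.cast hlen.symm), (hmem _).1 (List.get_mem _ _)⟩
  have hbij : Function.Bijective r0 := by
    constructor
    · intro i j hij
      have := congrArg Subtype.val hij
      have := List.nodup_iff_injective_get.1 hnodup this
      simpa using this
    · rintro ⟨x, hx⟩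
      obtain ⟨i, hi⟩ := List.get_of_mem ((hmem x).2 hx)
      exact ⟨i.cast hlen, Subtype.ext (by simpa [r0] using hi)⟩
  refine ⟨Equiv.ofBijective r0 hbij, ?_⟩
  rw [Matrix.det_vandermonde, mul_pow, ← pow_mul, ← Finset.prod_pow]
  unfold polyDisc
  congr 1
  · congr 1; omega
  · rw [Finset.prod_range]
    apply Finset.prod_congr rfl
    intro i _
    rw [Finset.prod_range, ← Finset.prod_pow, ← Finset.prod_filter_mul_prod_filter_not _ (fun j => i < j)]
    rw [Finset.prod_eq_one (s := Finset.univ.filter (fun j => ¬ i < j)), mul_one]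
    · have hIoi : Finset.univ.filter (fun j => i < j) = Finset.Ioi i := by
        ext j; simp
      rw [hIoi]
      apply Finset.prod_congr rfl
      intro j hj
      have hij : (i : ℕ) < j := by simpa using hj
      have hget : ∀ k : Fin f.natDegree, s.toList.getD k 0 = (r0 k : L) := by
        intro k
        rw [List.getD_eq_getElem _ _ (by rw [hlen]; exact k.2)]
        rfl
      rw [if_pos hij, hget, hget]
      simp only [Equiv.ofBijective_apply]
      ring
    · intro j hj
      rw [if_neg]
      simpa using hj

open Equiv in
theorem gal_smul_sqrt_disc (f : ℚ[X]) [Fact ((f.map (algebraMap ℚ f.SplittingField)).Splits)]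
    [DecidableEq (f.rootSet f.SplittingField)] {m : ℕ}
    (r : Fin m ≃ f.rootSet f.SplittingField) (φ : f.SplittingField ≃ₐ[ℚ] f.SplittingField) :
    φ ((algebraMap ℚ f.SplittingField f.leadingCoeff) ^ (m - 1) *
        (Matrix.vandermonde (fun i => (r i : f.SplittingField))).det) =
    ((Perm.sign (Gal.galActionHom f f.SplittingField (Gal.restrict f f.SplittingField φ)) : ℤ) :
      f.SplittingField) *
    ((algebraMap ℚ f.SplittingField f.leadingCoeff) ^ (m - 1) *
        (Matrix.vandermonde (fun i => (r i : f.SplittingField))).det) := by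
  set g := Gal.galActionHom f f.SplittingField (Gal.restrict f f.SplittingField φ) with hg
  have hact : ∀ x : f.rootSet f.SplittingField, φ (x : f.SplittingField) = (g x : f.SplittingField) :=
    fun x => (Gal.galActionHom_restrict f f.SplittingField φ x).symm
  let π : Perm (Fin m) := (r.trans g).trans r.symm
  have hπ : Perm.sign π = Perm.sign g := Perm.sign_trans_trans_symm g r
  rw [map_mul, map_pow, AlgEquiv.commutes]
  have h1 : φ (Matrix.vandermonde (fun i => (r i : f.SplittingField))).det =
      ((Matrix.vandermonde (fun i => (r i : f.SplittingField))).submatrix π id).det := by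
    rw [show φ (Matrix.vandermonde (fun i => (r i : f.SplittingField))).det =
      (φ : f.SplittingField →+* f.SplittingField)
        (Matrix.vandermonde (fun i => (r i : f.SplittingField))).det from rfl, RingHom.map_det]
    congr 1
    ext i j
    simp [Matrix.vandermonde_apply, π, hact]
  rw [h1, Matrix.det_permute, hπ]
  ring

theorem gal_contains_alternating_of_newton_polygon (m : ℕ) (c : ℕ → ℚ) (f : Polynomial ℚ)
    (hf : f = ∑ j ∈ Finset.range (m + 1),
      Polynomial.C ((m.choose j : ℚ) * c j) * Polynomial.X ^ j)
    (hirr : Irreducible f) (hdeg : f.natDegree = m)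
    (p : ℕ) (hp : p.Prime) (hp1 : m < 2 * p) (hp2 : p + 2 < m)
    (h1 : ∀ j ≤ m, c j = 0 ∨ 0 ≤ padicValRat p (c j))
    (h2 : c 0 ≠ 0 ∧ padicValRat p (c 0) = 1)
    (h3 : ∀ j ≤ m - p, c j = 0 ∨ 1 ≤ padicValRat p (c j))
    (h4 : c p ≠ 0 ∧ padicValRat p (c p) = 0) :
    (∀ σ : Equiv.Perm (f.rootSet f.SplittingField),
        @Equiv.Perm.sign _ (Classical.decEq _) _ σ = 1 →
        σ ∈ (@Polynomial.Gal.galActionHom ℚ _ f f.SplittingField _ _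
          ⟨Polynomial.SplittingField.splits f⟩).range) ∧
    ((∃ q : ℚ, q ≠ 0 ∧ polyDisc f = algebraMap ℚ f.SplittingField (q ^ 2)) →
        Nonempty (f.Gal ≃* alternatingGroup (Fin m))) ∧
    (¬ (∃ q : ℚ, q ≠ 0 ∧ polyDisc f = algebraMap ℚ f.SplittingField (q ^ 2)) →
        Nonempty (f.Gal ≃* Equiv.Perm (Fin m))) := by
  classical
  have hfact : Fact ((f.map (algebraMap ℚ f.SplittingField)).Splits) := ⟨SplittingField.splits f⟩
  have hnormal : Normal ℚ f.SplittingField := splittingField_normal f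
  have hgalois : IsGalois ℚ f.SplittingField := IsGalois.mk
  have hdvd := prime_dvd_card_gal m c f hf p hp hp1 hp2 h1 h2 h3 h4
  set ρ := Gal.galActionHom f f.SplittingField with hρ
  have hinj : Function.Injective ρ := Gal.galActionHom_injective f f.SplittingField
  obtain ⟨r, hr⟩ := exists_sqrt_disc f hirr hdeg
  have hcard : Nat.card (f.rootSet f.SplittingField) = m := by
    rw [← Nat.card_congr r, Nat.card_fin]
  let eG : f.Gal ≃* ρ.range := MonoidHom.ofInjective hinj
  have htrans : MulAction.IsPretransitive ρ.range (f.rootSet f.SplittingField) := by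
    have := Gal.galAction_isPretransitive f f.SplittingField hirr
    refine ⟨fun x y => ?_⟩
    obtain ⟨g, hg⟩ := MulAction.exists_smul_eq f.Gal x y
    exact ⟨⟨ρ g, g, rfl⟩, hg⟩
  have hA : alternatingGroup (f.rootSet f.SplittingField) ≤ ρ.range := by
    refine transitive_prime_cycle ρ.range htrans hp (by omega) (by omega) ?_
    rw [← Nat.card_congr eG.toEquiv]
    exact hdvd
  have hA' : ∀ σ : Equiv.Perm (f.rootSet f.SplittingField), Equiv.Perm.sign σ = 1 →
      σ ∈ ρ.range := fun σ hσ => hA (Equiv.Perm.mem_alternatingGroup.2 hσ)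
  set δ := ((algebraMap ℚ f.SplittingField f.leadingCoeff) ^ (m - 1) *
        (Matrix.vandermonde (fun i => (r i : f.SplittingField))).det) with hδ
  have hδ0 : δ ≠ 0 := by
    apply mul_ne_zero
    · apply pow_ne_zero
      simpa using hirr.ne_zero
    · rw [Matrix.det_vandermonde_ne_zero_iff]
      exact Subtype.val_injective.comp r.injective
  have hact := gal_smul_sqrt_disc f r
  rw [← hδ] at hact
  have hsurj := Gal.restrict_surjective f f.SplittingField
  refine ⟨?_, ?_, ?_⟩
  · intro σ hσ
    apply hA' σ
    convert hσ
  · rintro ⟨q, hq0, hq⟩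
    have hsq : δ ^ 2 = (algebraMap ℚ f.SplittingField q) ^ 2 := by rw [← hr, hq, map_pow]
    have hδq : ∃ q' : ℚ, δ = algebraMap ℚ f.SplittingField q' := by
      rcases sq_eq_sq_iff_eq_or_eq_neg.1 hsq with h | h
      · exact ⟨q, h⟩
      · exact ⟨-q, by rw [h, map_neg]⟩
    obtain ⟨q', hq'⟩ := hδq
    have heven : ∀ g : f.Gal, Equiv.Perm.sign (ρ g) = 1 := by
      intro g
      obtain ⟨φ, rfl⟩ := hsurj g
      have h := hact φ
      rcases Int.units_eq_one_or (Equiv.Perm.sign (ρ (Gal.restrict f f.SplittingField φ)))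
        with h' | h'
      · exact h'
      · exfalso
        rw [h'] at h
        rw [hq', AlgEquiv.commutes, ← hq'] at h
        have h2 : (2 : f.SplittingField) * δ = 0 := by
          push_cast at h
          linear_combination h
        simp [hδ0] at h2
    have hrange : ρ.range = alternatingGroup (f.rootSet f.SplittingField) := by
      apply le_antisymm _ hA
      rintro _ ⟨g, rfl⟩
      exact Equiv.Perm.mem_alternatingGroup.2 (heven g)
    exact ⟨(eG.trans (MulEquiv.subgroupCongr hrange)).trans (Equiv.altCongrHom r.symm)⟩
  · intro hno
    have hodd : ∃ g : f.Gal, Equiv.Perm.sign (ρ g) ≠ 1 := by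
      by_contra! hall
      apply hno
      have hfix : ∀ φ : f.SplittingField ≃ₐ[ℚ] f.SplittingField, φ δ = δ := by
        intro φ
        rw [hact φ, hall]
        simp
      obtain ⟨q, hq⟩ := (IsGalois.mem_range_algebraMap_iff_fixed δ).2 hfix
      refine ⟨q, ?_, ?_⟩
      · rintro rfl
        exact hδ0 (by rw [← hq, map_zero])
      · rw [hr, map_pow, hq]
    obtain ⟨g, hg⟩ := hodd
    have hg' := (Int.units_eq_one_or _).resolve_left hg
    have htop : ρ.range = ⊤ := by
      rw [eq_top_iff]
      intro σ _
      rcases Int.units_eq_one_or (Equiv.Perm.sign σ) with h | h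
      · exact hA' σ h
      · have h3 : σ * ρ g ∈ ρ.range := hA' _ (by rw [map_mul, h, hg']; rfl)
        exact (Subgroup.mul_mem_cancel_right ρ.range (MonoidHom.mem_range.2 ⟨g, rfl⟩)).1 h3
    exact ⟨((eG.trans (MulEquiv.subgroupCongr htop)).trans Subgroup.topEquiv).trans
      (r.symm.permCongrHom)⟩
end
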